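/- arXiv:2102.04397 — 4 statements merged into one kernel-verified Lean document; each statement's English description precedes it below -/
import Mathlib

section
/- There is at most one (c,ε)-cyclically invariant coupling: if π and π' are couplings of μ and ν that are both (c,ε)-cyclically invariant, then π = π'. -/
open MeasureTheory Filter Topology Set
open scoped ENNReal

noncomputable section

namespace EOT

variable {X Y : Type*}

/-- A coupling of `μ` and `ν`: a probability measure on the product with the given marginals. -/
def IsCoupling [MeasurableSpace X] [MeasurableSpace Y]
    (μ : Measure X) (ν : Measure Y) (π : Measure (X × Y)) : Prop :=
  IsProbabilityMeasure π ∧ π.map Prod.fst = μ ∧ π.map Prod.snd = ν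

/-- `(c,ε)`-cyclical invariance: `π` is equivalent to `P = μ ⊗ ν`, with a positive version of the
density satisfying the cyclical identity for all `k` points. -/
def IsCyclInvariant [MeasurableSpace X] [MeasurableSpace Y]
    (c : X → Y → ℝ) (ε : ℝ) (μ : Measure X) (ν : Measure Y)
    (π : Measure (X × Y)) : Prop :=
  IsCoupling μ ν π ∧
  ∃ D : X × Y → ℝ, Measurable D ∧ (∀ z, 0 < D z) ∧
    π = (μ.prod ν).withDensity (fun z => ENNReal.ofReal (D z)) ∧
    ∀ (k : ℕ) (x : Fin (k + 1) → X) (y : Fin (k + 1) → Y),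
      (∏ i, D (x i, y i)) =
        Real.exp (-(1 / ε) * ((∑ i, c (x i) (y i)) - ∑ i, c (x i) (y (i + 1)))) *
        ∏ i, D (x i, y (i + 1))

/-- Topological support of a measure. -/
def mSupport {Z : Type*} [TopologicalSpace Z] [MeasurableSpace Z] (π : Measure Z) : Set Z :=
  {z | ∀ U : Set Z, IsOpen U → z ∈ U → 0 < π U}

/-- Weak convergence `π ε → π₀` as `ε → 0⁺`, tested against bounded continuous functions. -/
def TendstoWeakly {Z : Type*} [TopologicalSpace Z] [MeasurableSpace Z]
    (π : ℝ → Measure Z) (π₀ : Measure Z) : Prop :=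
  ∀ f : BoundedContinuousFunction Z ℝ,
    Tendsto (fun ε => ∫ z, f z ∂(π ε)) (𝓝[>] (0 : ℝ)) (𝓝 (∫ z, f z ∂π₀))

/-- `c`-cyclical monotonicity of a set `Γ ⊆ X × Y`. -/
def CCyclMonotone (c : X → Y → ℝ) (Γ : Set (X × Y)) : Prop :=
  ∀ (k : ℕ) (p : Fin (k + 1) → X × Y), (∀ i, p i ∈ Γ) →
    (∑ i, c (p i).1 (p i).2) ≤ ∑ i, c (p i).1 (p (i + 1)).2

/-- The rate function `I(x,y)`: supremum over `k ≥ 2`, points `(x_i,y_i)_{i=2}^k ⊆ Γ`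
(the first point being `z`) and permutations `σ` of the cost difference. -/
def rateI (c : X → Y → ℝ) (Γ : Set (X × Y)) (z : X × Y) : EReal :=
  ⨆ (k : ℕ) (p : Fin (k + 2) → X × Y) (_ : p 0 = z) (_ : ∀ i, i ≠ 0 → p i ∈ Γ)
    (σ : Equiv.Perm (Fin (k + 2))),
    (((∑ i, c (p i).1 (p i).2) - ∑ i, c (p i).1 (p (σ i)).2 : ℝ) : EReal)

/-- The variant of the rate function using only the cyclic shift. -/
def rateICyc (c : X → Y → ℝ) (Γ : Set (X × Y)) (z : X × Y) : EReal :=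
  ⨆ (k : ℕ) (p : Fin (k + 2) → X × Y) (_ : p 0 = z) (_ : ∀ i, i ≠ 0 → p i ∈ Γ),
    (((∑ i, c (p i).1 (p i).2) - ∑ i, c (p i).1 (p (i + 1)).2 : ℝ) : EReal)

open scoped Classical in
/-- Relative entropy (Kullback–Leibler divergence) `H(π|R)`, valued in `EReal`. -/
def relEntropy {Z : Type*} [MeasurableSpace Z] (π R : Measure Z) : EReal :=
  if π ≪ R ∧ Integrable (fun z => Real.log (π.rnDeriv R z).toReal) π
  then ((∫ z, Real.log (π.rnDeriv R z).toReal ∂π : ℝ) : EReal)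
  else ⊤

/-- Transport cost `∫ c dπ` (as a lower integral). -/
def transportCost [MeasurableSpace X] [MeasurableSpace Y]
    (c : X → Y → ℝ) (π : Measure (X × Y)) : ℝ≥0∞ :=
  ∫⁻ z, ENNReal.ofReal (c z.1 z.2) ∂π

/-- Entropic optimal transport objective `∫ c dπ + ε H(π|μ⊗ν)`. -/
def eotObj [MeasurableSpace X] [MeasurableSpace Y]
    (c : X → Y → ℝ) (ε : ℝ) (μ : Measure X) (ν : Measure Y) (π : Measure (X × Y)) : EReal :=
  (transportCost c π : EReal) + (ε : EReal) * relEntropy π (μ.prod ν)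

/-- The `c`-conjugate `ψ^c(y) = inf_x [ψ(x) + c(x,y)]`. -/
def cConj (c : X → Y → ℝ) (ψ : X → EReal) (y : Y) : EReal :=
  ⨅ x, ψ x + (c x y : EReal)

/-- A proper `c`-convex function `ψ(x) = sup_y [ζ(y) − c(x,y)]`. -/
def IsCConvex (c : X → Y → ℝ) (ψ : X → EReal) : Prop :=
  (∀ x, ψ x ≠ ⊥) ∧ (∃ x, ψ x ≠ ⊤) ∧
  ∃ ζ : Y → EReal, ∀ x, ψ x = ⨆ y, ζ y - (c x y : EReal)

/-- The `c`-subdifferential `∂_c ψ = {(x,y) : ψ^c(y) − ψ(x) = c(x,y)}`. -/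
def cSubdiff (c : X → Y → ℝ) (ψ : X → EReal) : Set (X × Y) :=
  {p | cConj c ψ p.2 - ψ p.1 = (c p.1 p.2 : EReal)}

/-- A Kantorovich potential for `Γ`: a `c`-convex `ψ` with `Γ ⊆ ∂_c ψ`. -/
def IsKantorovichPotential (c : X → Y → ℝ) (Γ : Set (X × Y)) (ψ : X → EReal) : Prop :=
  IsCConvex c ψ ∧ Γ ⊆ cSubdiff c ψ

/-- Uniqueness of Kantorovich potentials on a set `Λ ⊆ X`. -/
def UniquenessOfPotentials (c : X → Y → ℝ) (Γ : Set (X × Y)) (Λ : Set X) : Prop :=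
  ∀ ψ₁ ψ₂ : X → EReal, IsKantorovichPotential c Γ ψ₁ → IsKantorovichPotential c Γ ψ₂ →
    ∀ x ∈ Λ, ∀ x' ∈ Λ, ψ₁ x - ψ₂ x = ψ₁ x' - ψ₂ x'

/-- The Rockafellar antiderivative `ψ_{(x₀,y₀)}` of `Γ`. -/
def rockafellar (c : X → Y → ℝ) (Γ : Set (X × Y)) (z₀ : X × Y) (x : X) : EReal :=
  ⨆ (k : ℕ) (p : Fin (k + 1) → X × Y) (_ : ∀ i, p i ∈ Γ),
    ((c z₀.1 z₀.2 - c (p 0).1 z₀.2 +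
        ∑ i : Fin (k + 1),
          (c (p i).1 (p i).2 -
            c (if h : (i : ℕ) + 1 < k + 1 then (p ⟨(i : ℕ) + 1, h⟩).1 else x) (p i).2) : ℝ) : EReal)

section Statement

variable {X Y : Type*}
  [MeasurableSpace X] [TopologicalSpace X] [PolishSpace X] [BorelSpace X]
  [MeasurableSpace Y] [TopologicalSpace Y] [PolishSpace Y] [BorelSpace Y]

/-! Two densities with the same cross ratios have a quotient of the form `a x * b y`, so one
coupling is a reweighting of the other by such a product. A function `φ x + ψ y` has the same
integral under both couplings, so it pairs to zero with the weight `a x * b y - 1`. The classical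
choice `φ = log ∘ a`, `ψ = log ∘ b` makes the product of the two nonnegative, but it need not be
integrable; replacing `log t` by the bounded function `(t - 1) / (t + 1)` keeps the sign, because
`(s * t - 1) * ((s - 1) / (s + 1) + (t - 1) / (t + 1)) = 2 * (s * t - 1) ^ 2 / ((s + 1) * (t + 1))`.
Hence `a x * b y = 1` almost everywhere. -/

/-- The Cayley transform of the half-line `[0, ∞)` onto `[-1, 1)`, used as a bounded substitute for
the logarithm. At `t = -1` it takes the junk value `0`. -/
def cayley (t : ℝ) : ℝ := (t - 1) / (t + 1)

theorem measurable_cayley : Measurable cayley :=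
  (measurable_id.sub_const 1).div (measurable_id.add_const 1)

theorem abs_cayley_le_one {t : ℝ} (ht : 0 ≤ t) : |cayley t| ≤ 1 := by
  rw [cayley, abs_div, abs_of_pos (by linarith : 0 < t + 1), div_le_one (by linarith), abs_le]
  constructor <;> linarith

theorem mul_sub_one_mul_cayley_add_cayley {s t : ℝ} (hs : s + 1 ≠ 0) (ht : t + 1 ≠ 0) :
    (s * t - 1) * (cayley s + cayley t) = 2 * (s * t - 1) ^ 2 / ((s + 1) * (t + 1)) := by
  unfold cayley
  field_simp
  ring

theorem mul_sub_one_mul_cayley_add_cayley_nonneg {s t : ℝ} (hs : 0 < s) (ht : 0 < t) :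
    0 ≤ (s * t - 1) * (cayley s + cayley t) := by
  rw [mul_sub_one_mul_cayley_add_cayley (by positivity) (by positivity)]
  positivity

theorem mul_sub_one_mul_cayley_add_cayley_eq_zero_iff {s t : ℝ} (hs : 0 < s) (ht : 0 < t) :
    (s * t - 1) * (cayley s + cayley t) = 0 ↔ s * t = 1 := by
  have hden : (s + 1) * (t + 1) ≠ 0 := by positivity
  rw [mul_sub_one_mul_cayley_add_cayley (by positivity) (by positivity)]
  simp [hden, sub_eq_zero]

theorem integrable_cayley_comp {α : Type*} [MeasurableSpace α] {μ : Measure α} [IsFiniteMeasure μ]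
    {a : α → ℝ} (ha : Measurable a) (ha0 : ∀ x, 0 ≤ a x) :
    Integrable (fun x => cayley (a x)) μ :=
  .of_bound (measurable_cayley.comp ha).aestronglyMeasurable 1
    (.of_forall fun x => abs_cayley_le_one (ha0 x))

section WithDensity

variable {α : Type*} [MeasurableSpace α] {π : Measure α} {w f : α → ℝ}

theorem integrable_mul_of_integrable_withDensity_ofReal (hw : Measurable w) (hw0 : ∀ z, 0 ≤ w z)
    (hf : Integrable f (π.withDensity fun z => ENNReal.ofReal (w z))) :
    Integrable (fun z => w z * f z) π := by
  rw [integrable_withDensity_iff_integrable_smul' hw.ennreal_ofReal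
    (.of_forall fun _ => ENNReal.ofReal_lt_top)] at hf
  simpa only [ENNReal.toReal_ofReal (hw0 _), smul_eq_mul] using hf

theorem integral_withDensity_ofReal (hw : Measurable w) (hw0 : ∀ z, 0 ≤ w z) :
    ∫ z, f z ∂π.withDensity (fun z => ENNReal.ofReal (w z)) = ∫ z, w z * f z ∂π := by
  rw [integral_withDensity_eq_integral_toReal_smul hw.ennreal_ofReal
    (.of_forall fun _ => ENNReal.ofReal_lt_top)]
  simp only [ENNReal.toReal_ofReal (hw0 _), smul_eq_mul]

theorem ae_sub_one_mul_eq_zero_of_integral_withDensity_eq (hw : Measurable w) (hw0 : ∀ z, 0 ≤ w z)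
    (hf : Integrable f π) (hfw : Integrable f (π.withDensity fun z => ENNReal.ofReal (w z)))
    (hnonneg : ∀ z, 0 ≤ (w z - 1) * f z)
    (heq : ∫ z, f z ∂π.withDensity (fun z => ENNReal.ofReal (w z)) = ∫ z, f z ∂π) :
    ∀ᵐ z ∂π, (w z - 1) * f z = 0 := by
  have hwf := integrable_mul_of_integrable_withDensity_ofReal hw hw0 hfw
  simp only [sub_one_mul] at hnonneg ⊢
  have hzero : ∫ z, (w z * f z - f z) ∂π = 0 := by
    rw [integral_sub hwf hf, ← integral_withDensity_ofReal hw hw0, heq, sub_self]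
  exact (integral_eq_zero_iff_of_nonneg hnonneg (hwf.sub hf)).mp hzero

end WithDensity

section Marginals

variable {α β : Type*} [MeasurableSpace α] [MeasurableSpace β] {π : Measure (α × β)}

theorem integrable_fst_add_snd {f : α → ℝ} {g : β → ℝ} (hf : Integrable f π.fst)
    (hg : Integrable g π.snd) : Integrable (fun z => f z.1 + g z.2) π :=
  (hf.comp_measurable measurable_fst).add (hg.comp_measurable measurable_snd)

theorem integral_fst_add_snd {f : α → ℝ} {g : β → ℝ} (hf : Integrable f π.fst)
    (hg : Integrable g π.snd) :
    ∫ z, (f z.1 + g z.2) ∂π = ∫ x, f x ∂π.fst + ∫ y, g y ∂π.snd := by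
  rw [Measure.fst, Measure.snd, integral_map measurable_fst.aemeasurable hf.aestronglyMeasurable,
    integral_map measurable_snd.aemeasurable hg.aestronglyMeasurable]
  exact integral_add (hf.comp_measurable measurable_fst) (hg.comp_measurable measurable_snd)

theorem integral_fst_add_snd_congr {π' : Measure (α × β)} {f : α → ℝ} {g : β → ℝ}
    (hf : Integrable f π.fst) (hg : Integrable g π.snd) (hfst : π'.fst = π.fst)
    (hsnd : π'.snd = π.snd) : ∫ z, (f z.1 + g z.2) ∂π' = ∫ z, (f z.1 + g z.2) ∂π := by
  rw [integral_fst_add_snd hf hg, ← hfst, ← hsnd,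
    integral_fst_add_snd (by rwa [hfst]) (by rwa [hsnd])]

theorem withDensity_mul_eq_self_of_marginals_eq [IsFiniteMeasure π] {a : α → ℝ} {b : β → ℝ}
    (ha : Measurable a) (hb : Measurable b) (ha0 : ∀ x, 0 < a x) (hb0 : ∀ y, 0 < b y)
    (hfst : (π.withDensity fun z => ENNReal.ofReal (a z.1 * b z.2)).fst = π.fst)
    (hsnd : (π.withDensity fun z => ENNReal.ofReal (a z.1 * b z.2)).snd = π.snd) :
    π.withDensity (fun z => ENNReal.ofReal (a z.1 * b z.2)) = π := by
  have hφ : Integrable (fun x => cayley (a x)) π.fst :=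
    integrable_cayley_comp ha fun x => (ha0 x).le
  have hψ : Integrable (fun y => cayley (b y)) π.snd :=
    integrable_cayley_comp hb fun y => (hb0 y).le
  have hae : ∀ᵐ z ∂π, (a z.1 * b z.2 - 1) * (cayley (a z.1) + cayley (b z.2)) = 0 :=
    ae_sub_one_mul_eq_zero_of_integral_withDensity_eq (by fun_prop)
      (fun z => (mul_pos (ha0 z.1) (hb0 z.2)).le) (integrable_fst_add_snd hφ hψ)
      (integrable_fst_add_snd (by rwa [hfst]) (by rwa [hsnd]))
      (fun z => mul_sub_one_mul_cayley_add_cayley_nonneg (ha0 z.1) (hb0 z.2))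
      (integral_fst_add_snd_congr hφ hψ hfst hsnd)
  have hone : (fun z => ENNReal.ofReal (a z.1 * b z.2)) =ᵐ[π] 1 := by
    filter_upwards [hae] with z hz
    simp [(mul_sub_one_mul_cayley_add_cayley_eq_zero_iff (ha0 z.1) (hb0 z.2)).mp hz]
  rw [withDensity_congr_ae hone, withDensity_one]

end Marginals

/-- `D` is a positive function on a product whose cross ratio
`D (x, y) * D (x', y') / (D (x, y') * D (x', y))` is `R x x' y y'`. -/
def HasCrossRatio {α β : Type*} (R : α → α → β → β → ℝ) (D : α × β → ℝ) : Prop :=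
  (∀ z, 0 < D z) ∧
    ∀ x x' y y', D (x, y) * D (x', y') = R x x' y y' * (D (x, y') * D (x', y))

/-- `π` has a measurable version of its density with respect to `P` whose cross ratios are `R`. For
cyclically invariant couplings `P` is the product of the marginals. -/
def HasDensityWithCrossRatio {α β : Type*} [MeasurableSpace α] [MeasurableSpace β]
    (P : Measure (α × β)) (R : α → α → β → β → ℝ) (π : Measure (α × β)) : Prop :=
  ∃ D : α × β → ℝ, Measurable D ∧ HasCrossRatio R D ∧
    π = P.withDensity fun z => ENNReal.ofReal (D z)

section CrossRatio

variable {α β : Type*} {R : α → α → β → β → ℝ} {D D' : α × β → ℝ}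

theorem HasCrossRatio.div (hD : HasCrossRatio R D) (hD' : HasCrossRatio R D') :
    HasCrossRatio 1 (D / D') := by
  refine ⟨fun z => div_pos (hD.1 z) (hD'.1 z), fun x x' y y' => ?_⟩
  have hR : R x x' y y' ≠ 0 := by
    rintro hR
    refine (mul_pos (hD.1 (x, y)) (hD.1 (x', y'))).ne' ?_
    rw [hD.2, hR, zero_mul]
  simp only [Pi.div_apply, Pi.one_apply, one_mul, div_mul_div_comm, hD.2 x x' y y',
    hD'.2 x x' y y', mul_div_mul_left _ _ hR]

variable [MeasurableSpace α] [MeasurableSpace β]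

theorem HasCrossRatio.exists_eq_mul [Nonempty (α × β)] (hDm : Measurable D)
    (hD : HasCrossRatio 1 D) :
    ∃ (a : α → ℝ) (b : β → ℝ), Measurable a ∧ Measurable b ∧ (∀ x, 0 < a x) ∧ (∀ y, 0 < b y) ∧
      ∀ z, D z = a z.1 * b z.2 := by
  obtain ⟨x₀, y₀⟩ := ‹Nonempty (α × β)›.some
  refine ⟨fun x => D (x, y₀), fun y => D (x₀, y) / D (x₀, y₀),
    hDm.comp measurable_prodMk_right, (hDm.comp measurable_prodMk_left).div_const _,
    fun x => hD.1 _, fun y => div_pos (hD.1 _) (hD.1 _), fun ⟨x, y⟩ => ?_⟩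
  have hcross := hD.2 x x₀ y y₀
  rw [Pi.one_apply, Pi.one_apply, Pi.one_apply, Pi.one_apply, one_mul] at hcross
  rw [← mul_div_assoc, eq_div_iff (hD.1 _).ne', hcross]

theorem HasDensityWithCrossRatio.exists_eq_withDensity_mul {P π π' : Measure (α × β)}
    [Nonempty (α × β)] (hπ : HasDensityWithCrossRatio P R π)
    (hπ' : HasDensityWithCrossRatio P R π') :
    ∃ (a : α → ℝ) (b : β → ℝ), Measurable a ∧ Measurable b ∧ (∀ x, 0 < a x) ∧ (∀ y, 0 < b y) ∧
      π' = π.withDensity fun z => ENNReal.ofReal (a z.1 * b z.2) := by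
  obtain ⟨D, hDm, hD, rfl⟩ := hπ
  obtain ⟨D', hDm', hD', rfl⟩ := hπ'
  obtain ⟨a, b, ha, hb, ha0, hb0, hab⟩ := (hD'.div hD).exists_eq_mul (hDm'.div hDm)
  refine ⟨a, b, ha, hb, ha0, hb0, ?_⟩
  rw [← withDensity_mul _ hDm.ennreal_ofReal (by fun_prop)]
  congr with z
  rw [Pi.mul_apply, ← hab z, ← ENNReal.ofReal_mul (hD.1 z).le, Pi.div_apply,
    mul_div_cancel₀ _ (hD.1 z).ne']

theorem stmt0_general {P π π' : Measure (α × β)} [IsFiniteMeasure π]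
    (hπ : HasDensityWithCrossRatio P R π) (hπ' : HasDensityWithCrossRatio P R π')
    (hfst : π.fst = π'.fst) (hsnd : π.snd = π'.snd) : π = π' := by
  cases isEmpty_or_nonempty (α × β)
  · exact Subsingleton.elim π π'
  obtain ⟨a, b, ha, hb, ha0, hb0, rfl⟩ := hπ.exists_eq_withDensity_mul hπ'
  exact (withDensity_mul_eq_self_of_marginals_eq ha hb ha0 hb0 hfst.symm hsnd.symm).symm

theorem IsCyclInvariant.hasDensityWithCrossRatio {c : α → β → ℝ} {ε : ℝ} {μ : Measure α}
    {ν : Measure β} {π : Measure (α × β)} (hπ : IsCyclInvariant c ε μ ν π) :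
    HasDensityWithCrossRatio (μ.prod ν)
      (fun x x' y y' => Real.exp (-(1 / ε) * ((c x y + c x' y') - (c x y' + c x' y)))) π := by
  obtain ⟨-, D, hDm, hD0, hD, hcycl⟩ := hπ
  refine ⟨D, hDm, ⟨hD0, fun x x' y y' => ?_⟩, hD⟩
  simpa [Fin.sum_univ_two, Fin.prod_univ_two] using hcycl 1 ![x, x'] ![y, y']

end CrossRatio

/-- there is at most one `(c,ε)`-cyclically invariant coupling. -/
theorem stmt0 (μ : Measure X) (ν : Measure Y)
    [IsProbabilityMeasure μ] [IsProbabilityMeasure ν]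
    (c : X → Y → ℝ) (hc : Measurable fun p : X × Y => c p.1 p.2) (hc0 : ∀ x y, 0 ≤ c x y)
    (ε : ℝ) (hε : 0 < ε) (π π' : Measure (X × Y))
    (hπ : IsCyclInvariant c ε μ ν π) (hπ' : IsCyclInvariant c ε μ ν π') :
    π = π' := by
  have := hπ.1.1
  exact stmt0_general hπ.hasDensityWithCrossRatio hπ'.hasDensityWithCrossRatio
    (hπ.1.2.1.trans hπ'.1.2.1.symm) (hπ.1.2.2.trans hπ'.1.2.2.symm)

end Statement

end EOT
end
end

section
/- Suppose there exists a coupling π ∈ Π(μ,ν) with ∫ c dπ + H(π|P) < ∞. Then a coupling π ∈ Π(μ,ν) is (c,ε)-cyclically invariant if and only if it minimizes π ↦ ∫ c dπ + ε H(π|P) over Π(μ,ν); moreover, there exists a unique such coupling. -/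
open MeasureTheory Filter Topology Set
open scoped ENNReal

noncomputable section

namespace EOT

variable {X Y : Type*}

/-! A coupling of finite cost is `π = Z P` for a density `Z`, and its cost is the integral of the
convex function `c Z + ε klFun Z`. The strong midpoint convexity of `klFun` makes minimising
sequences Cauchy in `L¹`, so a minimiser `Z` exists.

At a minimiser, moving mass from a pair `(x₁, y₁), (x₂, y₂)` to the crossed pair
`(x₁, y₂), (x₂, y₁)` preserves both marginals and cannot lower the cost. To first order this says
that `W := exp (c / ε) Z` satisfies `W(x₁, y₁) W(x₂, y₂) ≤ W(x₁, y₂) W(x₂, y₁)`, and equality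
follows by exchanging the two pairs. Freezing one of the points gives
`Z(x, y) = exp (f x + g y - c(x, y) / ε)`, which is exactly cyclical invariance.

Two couplings with densities of this form, with potentials `f₁, g₁` and `f₂, g₂`, give the same
integral to `arctan (f₁ - f₂) + arctan (g₁ - g₂)`, whose sign is that of the difference of the
densities; so they coincide. The cyclically invariant coupling is therefore unique, and it is the
minimiser. -/

section KLFun

open InformationTheory

-- Young's inequality for the pair `x log x`, `exp`: the left side is linear in `x` and `m`, and
-- optimising over `s` recovers the right side, the Bregman divergence of `klFun`.
lemma le_klFun_sub_klFun_sub {x m : ℝ} (hx : 0 ≤ x) (hm : 0 < m) (s : ℝ) :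
    s * x - (Real.exp s - 1) * m ≤ klFun x - klFun m - (x - m) * Real.log m := by
  simp only [klFun_apply]
  rcases hx.eq_or_lt with rfl | hx
  · have := mul_pos (Real.exp_pos s) hm
    simp only [Real.log_zero]
    linarith
  · have hlog : s + Real.log m - Real.log x ≤ Real.exp s * m / x - 1 := by
      have := Real.log_le_sub_one_of_pos (div_pos (mul_pos (Real.exp_pos s) hm) hx)
      rwa [Real.log_div (by positivity) hx.ne', Real.log_mul (Real.exp_ne_zero s) hm.ne',
        Real.log_exp] at this
    have hmul := mul_le_mul_of_nonneg_left hlog hx.le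
    rw [mul_sub x (_ / x), mul_div_cancel₀ _ hx.ne'] at hmul
    linarith

lemma klFun_le_add_sub_mul_log {x m : ℝ} (hx : 0 ≤ x) (hm : 0 < m) :
    klFun m ≤ klFun x + (m - x) * Real.log m := by
  have := le_klFun_sub_klFun_sub hx hm 0
  simp only [Real.exp_zero, sub_self, zero_mul] at this
  linarith

lemma two_mul_klFun_midpoint_add_le {x y s : ℝ} (hx : 0 ≤ x) (hy : 0 ≤ y) (hs : |s| ≤ 1) :
    2 * klFun ((x + y) / 2) + s * |x - y| ≤ klFun x + klFun y + s ^ 2 * (x + y) := by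
  wlog hyx : y ≤ x generalizing x y
  · have := this hy hx (le_of_not_ge hyx)
    rwa [add_comm y x, abs_sub_comm, add_comm (klFun y)] at this
  rcases (add_nonneg hx hy).eq_or_lt with hxy | hxy
  · obtain rfl : x = 0 := by linarith
    obtain rfl : y = 0 := by linarith
    simp [two_mul]
  · obtain ⟨m, hm⟩ : ∃ m, m = (x + y) / 2 := ⟨_, rfl⟩
    have hm0 : 0 < m := by linarith
    have hexp : Real.exp s + Real.exp (-s) - 2 ≤ 2 * s ^ 2 := by
      have h₁ := (abs_le.1 (Real.abs_exp_sub_one_sub_id_le hs)).2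
      have h₂ := (abs_le.1 (Real.abs_exp_sub_one_sub_id_le (x := -s) (by rwa [abs_neg]))).2
      linarith
    have hmul := mul_le_mul_of_nonneg_right hexp hm0.le
    have hbx := le_klFun_sub_klFun_sub hx hm0 s
    have hby := le_klFun_sub_klFun_sub hy hm0 (-s)
    obtain rfl : x = 2 * m - y := by linarith
    rw [← hm, abs_of_nonneg (by linarith)]
    linarith

lemma nonneg_and_klFun_add_le {x a b t : ℝ} (hx : 0 ≤ x) (ht : 0 < t) (ha₀ : 0 ≤ a) (ha₁ : a ≤ 1)
    (hb₀ : 0 ≤ b) (hb₁ : b ≤ 1) (hbx : b ≠ 0 → 2 * t ≤ x) :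
    0 ≤ x + t * (a - b) ∧
      klFun (x + t * (a - b)) ≤
        klFun x + t * (a * Real.log (x + t) - b * Real.log (x - t)) := by
  obtain ⟨w, hw⟩ : ∃ w, w = x + t * (a - b) := ⟨_, rfl⟩
  have hwx : w - x = t * (a - b) := by linarith
  rw [← hw]
  have hw_le : w ≤ x + t := by nlinarith
  have hle_w : x - t ≤ w := by nlinarith
  by_cases hab : a = 0 ∧ b = 0
  · obtain ⟨rfl, rfl⟩ := hab
    obtain rfl : w = x := by linarith
    simpa using hx
  · have hw₀ : 0 < w := by
      rcases eq_or_ne b 0 with rfl | hb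
      · have : 0 < t * a := mul_pos ht (ha₀.lt_of_ne' fun h => hab ⟨h, rfl⟩)
        linarith
      · linarith [hbx hb, hle_w]
    have hlog_le : a * Real.log w ≤ a * Real.log (x + t) :=
      mul_le_mul_of_nonneg_left (Real.log_le_log hw₀ hw_le) ha₀
    have hle_log : b * Real.log (x - t) ≤ b * Real.log w := by
      rcases eq_or_ne b 0 with rfl | hb
      · simp
      · exact mul_le_mul_of_nonneg_left
          (Real.log_le_log (by linarith [hbx hb]) hle_w) hb₀
    refine ⟨hw₀.le, (klFun_le_add_sub_mul_log hx hw₀).trans ?_⟩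
    rw [hwx, mul_assoc, sub_mul]
    gcongr

lemma mul_add_mul_klFun_nonneg {c ε x : ℝ} (hc : 0 ≤ c) (hε : 0 ≤ ε) (hx : 0 ≤ x) :
    0 ≤ c * x + ε * klFun x :=
  add_nonneg (mul_nonneg hc hx) (mul_nonneg hε (klFun_nonneg hx))

lemma two_mul_ofReal_midpoint_add_le {c ε x y s : ℝ} (hc : 0 ≤ c) (hε : 0 ≤ ε) (hx : 0 ≤ x)
    (hy : 0 ≤ y) (hs₀ : 0 ≤ s) (hs : s ≤ 1) :
    2 * ENNReal.ofReal (c * ((x + y) / 2) + ε * klFun ((x + y) / 2)) +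
        ENNReal.ofReal (ε * s) * ‖x - y‖ₑ ≤
      ENNReal.ofReal (c * x + ε * klFun x) + ENNReal.ofReal (c * y + ε * klFun y) +
        ENNReal.ofReal (ε * s ^ 2) * (ENNReal.ofReal x + ENNReal.ofReal y) := by
  have hφx := mul_add_mul_klFun_nonneg hc hε hx
  have hφy := mul_add_mul_klFun_nonneg hc hε hy
  have hφm := mul_add_mul_klFun_nonneg hc hε (show 0 ≤ (x + y) / 2 by positivity)
  have hmid := mul_le_mul_of_nonneg_left
    (two_mul_klFun_midpoint_add_le hx hy (abs_le.2 ⟨by linarith, hs⟩)) hε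
  rw [Real.enorm_eq_ofReal_abs, ← ENNReal.ofReal_ofNat 2, ← ENNReal.ofReal_mul zero_le_two,
    ← ENNReal.ofReal_mul (by positivity), ← ENNReal.ofReal_add (by positivity) (by positivity),
    ← ENNReal.ofReal_add hφx hφy, ← ENNReal.ofReal_add hx hy,
    ← ENNReal.ofReal_mul (by positivity), ← ENNReal.ofReal_add (by positivity) (by positivity)]
  exact ENNReal.ofReal_le_ofReal (by linarith)

end KLFun

section EntropicCost

open InformationTheory

variable {Ω : Type*} [MeasurableSpace Ω] {P : Measure Ω} {𝒞 : Set (Set Ω)} {c Z W : Ω → ℝ} {ε : ℝ}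

/-- `Z` is the density with respect to `P` of a measure that agrees with `P` on the family `𝒞`.
The densities of the couplings arise from the family of cylinder sets in a product. -/
structure IsMatchingDensity (P : Measure Ω) (𝒞 : Set (Set Ω)) (Z : Ω → ℝ) : Prop where
  measurable : Measurable Z
  nonneg : ∀ z, 0 ≤ Z z
  integrable : Integrable Z P
  setIntegral_eq : ∀ S ∈ 𝒞, ∫ z in S, Z z ∂P = P.real S

/-- The entropic transport objective `∫ c dπ + ε H(π|P)` of `π = Z P`, as a function of the density
`Z`. The integrand uses `klFun z = z log z + 1 - z ≥ 0` instead of `z log z`, so that a lower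
integral can be taken; this does not change the value when `π` and `P` have the same mass. -/
def entropicCost (P : Measure Ω) (c : Ω → ℝ) (ε : ℝ) (Z : Ω → ℝ) : ℝ≥0∞ :=
  ∫⁻ z, ENNReal.ofReal (c z * Z z + ε * klFun (Z z)) ∂P

lemma measurable_entropicIntegrand (hc : Measurable c) (hZ : Measurable Z) :
    Measurable fun z => c z * Z z + ε * klFun (Z z) :=
  (hc.mul hZ).add ((measurable_klFun.comp hZ).const_mul ε)

namespace IsMatchingDensity

lemma midpoint (hZ : IsMatchingDensity P 𝒞 Z) (hW : IsMatchingDensity P 𝒞 W) :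
    IsMatchingDensity P 𝒞 fun z => (Z z + W z) / 2 where
  measurable := (hZ.measurable.add hW.measurable).div_const 2
  nonneg z := div_nonneg (add_nonneg (hZ.nonneg z) (hW.nonneg z)) zero_le_two
  integrable := (hZ.integrable.add hW.integrable).div_const 2
  setIntegral_eq S hS := by
    rw [integral_div, integral_add hZ.integrable.integrableOn hW.integrable.integrableOn,
      hZ.setIntegral_eq S hS, hW.setIntegral_eq S hS]
    ring

lemma of_tendsto_eLpNorm {Zs : ℕ → Ω → ℝ} (hZs : ∀ n, IsMatchingDensity P 𝒞 (Zs n))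
    (hZ : Measurable Z) (hZ₀ : ∀ z, 0 ≤ Z z) (hZi : Integrable Z P)
    (hlim : Tendsto (fun n => eLpNorm (Zs n - Z) 1 P) atTop (𝓝 0)) :
    IsMatchingDensity P 𝒞 Z where
  measurable := hZ
  nonneg := hZ₀
  integrable := hZi
  setIntegral_eq S hS := by
    refine tendsto_nhds_unique (tendsto_setIntegral_of_L1' Z hZi.aestronglyMeasurable
      (.of_forall fun n => (hZs n).integrable) hlim S) ?_
    simp only [(hZs _).setIntegral_eq S hS, tendsto_const_nhds_iff]

lemma add_const_mul {h : Ω → ℝ} {t : ℝ} (hZ : IsMatchingDensity P 𝒞 Z) (hh : Measurable h)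
    (hhi : Integrable h P) (hh₀ : ∀ S ∈ 𝒞, ∫ z in S, h z ∂P = 0) (hZh : ∀ z, 0 ≤ Z z + t * h z) :
    IsMatchingDensity P 𝒞 fun z => Z z + t * h z where
  measurable := hZ.measurable.add (hh.const_mul t)
  nonneg := hZh
  integrable := hZ.integrable.add (hhi.const_mul t)
  setIntegral_eq S hS := by
    rw [integral_add hZ.integrable.integrableOn (hhi.const_mul t).integrableOn,
      integral_const_mul, hh₀ S hS, hZ.setIntegral_eq S hS, mul_zero, add_zero]

lemma lintegral_eq_one [IsProbabilityMeasure P] (hZ : IsMatchingDensity P 𝒞 Z)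
    (h𝒞 : univ ∈ 𝒞) : ∫⁻ z, ENNReal.ofReal (Z z) ∂P = 1 := by
  rw [← ofReal_integral_eq_lintegral_ofReal hZ.integrable (ae_of_all _ hZ.nonneg),
    ← setIntegral_univ, hZ.setIntegral_eq univ h𝒞, probReal_univ, ENNReal.ofReal_one]

lemma measure_eq_zero [IsFiniteMeasure P] (hZ : IsMatchingDensity P 𝒞 Z) {S : Set Ω} (hS : S ∈ 𝒞)
    (hZS : ∀ᵐ z ∂P, z ∈ S → Z z = 0) : P S = 0 := by
  rw [← measureReal_eq_zero_iff, ← hZ.setIntegral_eq S hS]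
  exact setIntegral_eq_zero_of_ae_eq_zero hZS

end IsMatchingDensity

lemma two_mul_entropicCost_midpoint_add_le [IsProbabilityMeasure P] (h𝒞 : univ ∈ 𝒞)
    (hc : Measurable c) (hc₀ : ∀ z, 0 ≤ c z) (hε : 0 ≤ ε)
    (hZ : IsMatchingDensity P 𝒞 Z) (hW : IsMatchingDensity P 𝒞 W)
    {s : ℝ} (hs₀ : 0 ≤ s) (hs : s ≤ 1) :
    2 * entropicCost P c ε (fun z => (Z z + W z) / 2) +
        ENNReal.ofReal (ε * s) * eLpNorm (Z - W) 1 P ≤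
      entropicCost P c ε Z + entropicCost P c ε W + ENNReal.ofReal (ε * s ^ 2) * 2 := by
  have hmeas {V : Ω → ℝ} (hV : IsMatchingDensity P 𝒞 V) :=
    (measurable_entropicIntegrand (ε := ε) hc hV.measurable).ennreal_ofReal
  have hM := hZ.midpoint hW
  calc 2 * entropicCost P c ε (fun z => (Z z + W z) / 2) +
          ENNReal.ofReal (ε * s) * eLpNorm (Z - W) 1 P
      = ∫⁻ z, 2 * ENNReal.ofReal (c z * ((Z z + W z) / 2) + ε * klFun ((Z z + W z) / 2)) +
          ENNReal.ofReal (ε * s) * ‖Z z - W z‖ₑ ∂P := by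
        rw [lintegral_add_left ((hmeas hM).const_mul 2), lintegral_const_mul 2 (hmeas hM),
          lintegral_const_mul' _ _ ENNReal.ofReal_ne_top, eLpNorm_one_eq_lintegral_enorm]
        rfl
    _ ≤ ∫⁻ z, ENNReal.ofReal (c z * Z z + ε * klFun (Z z)) +
          ENNReal.ofReal (c z * W z + ε * klFun (W z)) +
          ENNReal.ofReal (ε * s ^ 2) * (ENNReal.ofReal (Z z) + ENNReal.ofReal (W z)) ∂P :=
        lintegral_mono fun z => two_mul_ofReal_midpoint_add_le (hc₀ z) hε (hZ.nonneg z)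
          (hW.nonneg z) hs₀ hs
    _ = entropicCost P c ε Z + entropicCost P c ε W + ENNReal.ofReal (ε * s ^ 2) * 2 := by
        rw [lintegral_add_left ((hmeas hZ).fun_add (hmeas hW)), lintegral_add_left (hmeas hZ),
          lintegral_const_mul' _ _ ENNReal.ofReal_ne_top,
          lintegral_add_left hZ.measurable.ennreal_ofReal, hZ.lintegral_eq_one h𝒞,
          hW.lintegral_eq_one h𝒞, one_add_one_eq_two]
        rfl

lemma entropicCost_le_of_tendsto_eLpNorm (hc : Measurable c)
    {Zs : ℕ → Ω → ℝ} {I : ℝ≥0∞} (hZs : ∀ n, Measurable (Zs n)) (hZ : Measurable Z)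
    (hlim : Tendsto (fun n => eLpNorm (Zs n - Z) 1 P) atTop (𝓝 0))
    (hI : Tendsto (fun n => entropicCost P c ε (Zs n)) atTop (𝓝 I)) :
    entropicCost P c ε Z ≤ I := by
  obtain ⟨ns, hns, hae⟩ := (tendstoInMeasure_of_tendsto_eLpNorm one_ne_zero
    (fun n => (hZs n).aestronglyMeasurable) hZ.aestronglyMeasurable hlim).exists_seq_tendsto_ae
  calc entropicCost P c ε Z
      = ∫⁻ z, liminf (fun n => ENNReal.ofReal
          (c z * Zs (ns n) z + ε * klFun (Zs (ns n) z))) atTop ∂P := by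
        refine lintegral_congr_ae (hae.mono fun z hz => (Tendsto.liminf_eq ?_).symm)
        exact ENNReal.tendsto_ofReal
          ((hz.const_mul _).add (((continuous_klFun.tendsto _).comp hz).const_mul _))
    _ ≤ liminf (fun n => entropicCost P c ε (Zs (ns n))) atTop :=
        lintegral_liminf_le fun n => (measurable_entropicIntegrand hc (hZs _)).ennreal_ofReal
    _ = I := (hI.comp hns.tendsto_atTop).liminf_eq

lemma exists_tendsto_eLpNorm_one {Zs : ℕ → Ω → ℝ} {B : ℕ → ℝ≥0∞} (hZs : ∀ n, Measurable (Zs n))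
    (hZs₀ : ∀ n z, 0 ≤ Zs n z) (hZsi : ∀ n, Integrable (Zs n) P) (hB : ∑' n, B n ≠ ∞)
    (hcauchy : ∀ N n m, N ≤ n → N ≤ m → eLpNorm (Zs n - Zs m) 1 P < B N) :
    ∃ Z : Ω → ℝ, Measurable Z ∧ (∀ z, 0 ≤ Z z) ∧ Integrable Z P ∧
      Tendsto (fun n => eLpNorm (Zs n - Z) 1 P) atTop (𝓝 0) := by
  obtain ⟨Z, hZ, hlim⟩ := Lp.cauchy_complete_eLpNorm le_rfl
    (fun n => memLp_one_iff_integrable.2 (hZsi n)) hB hcauchy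
  obtain ⟨Z', hZ'm, hZZ'⟩ := hZ.1.aemeasurable
  have hZi := memLp_one_iff_integrable.1 hZ
  obtain ⟨ns, -, hae⟩ := (tendstoInMeasure_of_tendsto_eLpNorm one_ne_zero
    (fun n => (hZs n).aestronglyMeasurable) hZ.1 hlim).exists_seq_tendsto_ae
  have heq : Z =ᵐ[P] fun z => max (Z' z) 0 := by
    filter_upwards [hZZ', hae] with z hz hzlim
    rw [← hz, max_eq_left (ge_of_tendsto' hzlim fun n => hZs₀ _ z)]
  refine ⟨_, hZ'm.max measurable_const, fun z => le_max_right _ _, hZi.congr heq, ?_⟩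
  refine hlim.congr fun n => eLpNorm_congr_ae ?_
  filter_upwards [heq] with z hz
  simp only [Pi.sub_apply, hz]

lemma eLpNorm_sub_le_of_entropicCost_le [IsProbabilityMeasure P] (h𝒞 : univ ∈ 𝒞)
    (hc : Measurable c) (hc₀ : ∀ z, 0 ≤ c z) (hε : 0 < ε)
    (hZ : IsMatchingDensity P 𝒞 Z) (hW : IsMatchingDensity P 𝒞 W) {s : ℝ} (hs₀ : 0 < s)
    (hs : s ≤ 1) {I : ℝ≥0∞} (hI : I ≠ ∞)
    (hI_le : ∀ V, IsMatchingDensity P 𝒞 V → I ≤ entropicCost P c ε V)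
    (hZI : entropicCost P c ε Z ≤ I + ENNReal.ofReal (ε * s ^ 2))
    (hWI : entropicCost P c ε W ≤ I + ENNReal.ofReal (ε * s ^ 2)) :
    eLpNorm (Z - W) 1 P ≤ ENNReal.ofReal (4 * s) := by
  have hεs : ENNReal.ofReal (ε * s) ≠ 0 := by simpa using mul_pos hε hs₀
  have hmid : 2 * I + ENNReal.ofReal (ε * s) * eLpNorm (Z - W) 1 P ≤
      2 * I + ENNReal.ofReal (ε * s) * ENNReal.ofReal (4 * s) := calc
    _ ≤ 2 * entropicCost P c ε (fun z => (Z z + W z) / 2) +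
          ENNReal.ofReal (ε * s) * eLpNorm (Z - W) 1 P := by
        gcongr
        exact hI_le _ (hZ.midpoint hW)
    _ ≤ entropicCost P c ε Z + entropicCost P c ε W + ENNReal.ofReal (ε * s ^ 2) * 2 :=
        two_mul_entropicCost_midpoint_add_le h𝒞 hc hc₀ hε.le hZ hW hs₀.le hs
    _ ≤ (I + ENNReal.ofReal (ε * s ^ 2)) + (I + ENNReal.ofReal (ε * s ^ 2)) +
          ENNReal.ofReal (ε * s ^ 2) * 2 := by gcongr
    _ = 2 * I + ENNReal.ofReal (ε * s ^ 2) * ENNReal.ofReal 4 := by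
        rw [ENNReal.ofReal_ofNat]
        ring
    _ = 2 * I + ENNReal.ofReal (ε * s) * ENNReal.ofReal (4 * s) := by
        rw [← ENNReal.ofReal_mul (by positivity), ← ENNReal.ofReal_mul (by positivity)]
        ring_nf
  exact (ENNReal.mul_le_mul_iff_right hεs ENNReal.ofReal_ne_top).1
    ((ENNReal.add_le_add_iff_left (ENNReal.mul_ne_top ENNReal.ofNat_ne_top hI)).1 hmid)

lemma exists_tendsto_of_entropicCost_le [IsProbabilityMeasure P] (h𝒞 : univ ∈ 𝒞)
    (hc : Measurable c) (hc₀ : ∀ z, 0 ≤ c z) (hε : 0 < ε) {I : ℝ≥0∞} (hI : I ≠ ∞)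
    (hI_le : ∀ V, IsMatchingDensity P 𝒞 V → I ≤ entropicCost P c ε V) {Zs : ℕ → Ω → ℝ}
    (hZs : ∀ n, IsMatchingDensity P 𝒞 (Zs n))
    (hZs_le : ∀ n, entropicCost P c ε (Zs n) ≤ I + ENNReal.ofReal (ε * ((1 / 2) ^ n) ^ 2)) :
    ∃ Z, IsMatchingDensity P 𝒞 Z ∧ Tendsto (fun n => eLpNorm (Zs n - Z) 1 P) atTop (𝓝 0) := by
  have hcauchy : ∀ N n m, N ≤ n → N ≤ m →
      eLpNorm (Zs n - Zs m) 1 P < ENNReal.ofReal (5 * (1 / 2) ^ N) := fun N n m hn hm => by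
    have hle : ∀ k ≥ N, entropicCost P c ε (Zs k) ≤ I + ENNReal.ofReal (ε * ((1 / 2) ^ N) ^ 2) :=
      fun k hk => (hZs_le k).trans <| by
        have := pow_le_pow_of_le_one (by norm_num : (0 : ℝ) ≤ 1 / 2) (by norm_num) hk
        gcongr
    refine (eLpNorm_sub_le_of_entropicCost_le h𝒞 hc hc₀ hε (hZs n) (hZs m) (by positivity)
      (pow_le_one₀ (by norm_num) (by norm_num)) hI hI_le (hle n hn) (hle m hm)).trans_lt ?_
    rw [ENNReal.ofReal_lt_ofReal_iff (by positivity)]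
    gcongr
    norm_num
  obtain ⟨Z, hZ, hZ₀, hZi, hlim⟩ := exists_tendsto_eLpNorm_one (fun n => (hZs n).measurable)
    (fun n => (hZs n).nonneg) (fun n => (hZs n).integrable)
    (summable_geometric_two.mul_left 5).tsum_ofReal_ne_top hcauchy
  exact ⟨Z, .of_tendsto_eLpNorm hZs hZ hZ₀ hZi hlim, hlim⟩

theorem exists_isMinOn_entropicCost [IsProbabilityMeasure P] (h𝒞 : univ ∈ 𝒞)
    (hc : Measurable c) (hc₀ : ∀ z, 0 ≤ c z) (hε : 0 < ε)
    (hfin : ∃ Z, IsMatchingDensity P 𝒞 Z ∧ entropicCost P c ε Z ≠ ∞) :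
    ∃ Z, IsMatchingDensity P 𝒞 Z ∧
      IsMinOn (entropicCost P c ε) {Z | IsMatchingDensity P 𝒞 Z} Z := by
  obtain ⟨Z₁, hZ₁, hZ₁fin⟩ := hfin
  set I : ℝ≥0∞ := ⨅ (Z) (_ : IsMatchingDensity P 𝒞 Z), entropicCost P c ε Z
  have hI_le : ∀ V, IsMatchingDensity P 𝒞 V → I ≤ entropicCost P c ε V := fun V hV => iInf₂_le V hV
  have hI : I ≠ ∞ := ne_top_of_le_ne_top hZ₁fin (hI_le Z₁ hZ₁)
  have hnear : ∀ n : ℕ, ∃ Z, IsMatchingDensity P 𝒞 Z ∧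
      entropicCost P c ε Z < I + ENNReal.ofReal (ε * ((1 / 2) ^ n) ^ 2) := fun n => by
    have hlt : I < I + ENNReal.ofReal (ε * ((1 / 2) ^ n) ^ 2) :=
      ENNReal.lt_add_right hI (ENNReal.ofReal_pos.2 (by positivity)).ne'
    simpa only [I, iInf_lt_iff, exists_prop] using hlt
  choose Zs hZs hZs_lt using hnear
  obtain ⟨Z, hZ, hlim⟩ := exists_tendsto_of_entropicCost_le h𝒞 hc hc₀ hε hI hI_le hZs
    fun n => (hZs_lt n).le
  have hpow : Tendsto (fun n : ℕ => (1 / 2 : ℝ) ^ n) atTop (𝓝 0) :=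
    tendsto_pow_atTop_nhds_zero_of_lt_one (by norm_num) (by norm_num)
  have hcost : Tendsto (fun n => entropicCost P c ε (Zs n)) atTop (𝓝 I) := by
    refine tendsto_of_tendsto_of_tendsto_of_le_of_le tendsto_const_nhds ?_
      (fun n => hI_le _ (hZs n)) (fun n => (hZs_lt n).le)
    simpa using (tendsto_const_nhds (x := I)).add
      (ENNReal.tendsto_ofReal ((hpow.pow 2).const_mul ε))
  exact ⟨Z, hZ, fun V hV => (entropicCost_le_of_tendsto_eLpNorm hc (fun n => (hZs n).measurable)
    hZ.measurable hlim hcost).trans (hI_le V hV)⟩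

lemma IsMatchingDensity.integral_nonneg_of_isMinOn (hc : Measurable c) (hc₀ : ∀ z, 0 ≤ c z)
    (hε : 0 ≤ ε) (hZ : IsMatchingDensity P 𝒞 Z) (hfin : entropicCost P c ε Z ≠ ∞)
    (hmin : IsMinOn (entropicCost P c ε) {Z | IsMatchingDensity P 𝒞 Z} Z)
    (hW : IsMatchingDensity P 𝒞 W) {G : Ω → ℝ} (hG : Integrable G P)
    (hle : ∀ z, c z * W z + ε * klFun (W z) ≤ c z * Z z + ε * klFun (Z z) + G z) :
    0 ≤ ∫ z, G z ∂P := by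
  have hφ := fun z => mul_add_mul_klFun_nonneg (hc₀ z) hε (hZ.nonneg z)
  have hφG : ∀ z, 0 ≤ c z * Z z + ε * klFun (Z z) + G z := fun z =>
    (mul_add_mul_klFun_nonneg (hc₀ z) hε (hW.nonneg z)).trans (hle z)
  have hφi : Integrable (fun z => c z * Z z + ε * klFun (Z z)) P :=
    ⟨(measurable_entropicIntegrand hc hZ.measurable).aestronglyMeasurable,
      (hasFiniteIntegral_iff_ofReal (ae_of_all _ hφ)).2 hfin.lt_top⟩
  have hcost : ENNReal.ofReal (∫ z, c z * Z z + ε * klFun (Z z) ∂P) ≤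
      ENNReal.ofReal (∫ z, c z * Z z + ε * klFun (Z z) + G z ∂P) := by
    rw [ofReal_integral_eq_lintegral_ofReal hφi (ae_of_all _ hφ),
      ofReal_integral_eq_lintegral_ofReal (hφi.fun_add hG) (ae_of_all _ hφG)]
    exact (isMinOn_iff.1 hmin W hW).trans
      (lintegral_mono fun z => ENNReal.ofReal_le_ofReal (hle z))
  rw [ENNReal.ofReal_le_ofReal_iff (integral_nonneg hφG), integral_add hφi hG] at hcost
  linarith

end EntropicCost

section Exchange

open InformationTheory

/-- The cyclic exchange of second coordinates in a pair of points of `X × Y`: it sends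
`((x₁, y₁), (x₂, y₂))` to `((x₁, y₂), (x₂, y₁))`. -/
def cross (q : (X × Y) × (X × Y)) : (X × Y) × (X × Y) :=
  ((q.1.1, q.2.2), (q.2.1, q.1.2))

/-- The measurable cylinders in `X × Y`, i.e. the sets `A × Y` and `X × B`. A probability measure
on `X × Y` is a coupling of `μ` and `ν` iff it agrees with `μ.prod ν` on this family. -/
def cylinders (X Y : Type*) [MeasurableSpace X] [MeasurableSpace Y] : Set (Set (X × Y)) :=
  {S | (∃ A, MeasurableSet A ∧ Prod.fst ⁻¹' A = S) ∨ ∃ B, MeasurableSet B ∧ Prod.snd ⁻¹' B = S}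

/-- Densities of the couplings of `μ` and `ν` with respect to `μ.prod ν`. -/
abbrev IsCouplingDensity [MeasurableSpace X] [MeasurableSpace Y] (μ : Measure X) (ν : Measure Y)
    (Z : X × Y → ℝ) : Prop :=
  IsMatchingDensity (μ.prod ν) (cylinders X Y) Z

/-- The pointwise derivative of the integrand of `entropicCost` in the density, taken at
`Z z + t`. -/
def marginalCost {Ω : Type*} (c : Ω → ℝ) (ε : ℝ) (Z : Ω → ℝ) (t : ℝ) (z : Ω) : ℝ :=
  c z + ε * Real.log (Z z + t)

/-- The density of `Z P` with respect to the Gibbs measure `exp (-c / ε) P`. The optimal coupling is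
characterised by this density being a product of a function of `x` and a function of `y`. -/
def gibbsDensity {Ω : Type*} (c : Ω → ℝ) (ε : ℝ) (Z : Ω → ℝ) (z : Ω) : ℝ :=
  Real.exp (c z / ε) * Z z

/-- The density with respect to `P` of the first marginal of `P.prod P` restricted to `S`. -/
def sectionMass {Ω : Type*} [MeasurableSpace Ω] (P : Measure Ω) (S : Set (Ω × Ω)) (z : Ω) : ℝ :=
  P.real (Prod.mk z ⁻¹' S)

lemma cross_involutive : Function.Involutive (cross : (X × Y) × (X × Y) → _) := fun _ => rfl

lemma exp_marginalCost_div {Ω : Type*} {c Z : Ω → ℝ} {ε t : ℝ} (hε : ε ≠ 0) {z : Ω}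
    (hz : 0 < Z z + t) :
    Real.exp (marginalCost c ε Z t z / ε) = Real.exp (c z / ε) * (Z z + t) := by
  rw [marginalCost, add_div, mul_div_cancel_left₀ _ hε, Real.exp_add, Real.exp_log hz]

section SectionMass

variable {Ω : Type*} [MeasurableSpace Ω] {P : Measure Ω} {S : Set (Ω × Ω)}

lemma sectionMass_ne_zero {z : Ω} (h : sectionMass P S z ≠ 0) : ∃ w, (z, w) ∈ S := by
  by_contra! hempty
  exact h (by simp [sectionMass, preimage, hempty])

lemma sectionMass_mem_Icc [IsProbabilityMeasure P] (z : Ω) : sectionMass P S z ∈ Icc 0 1 :=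
  ⟨measureReal_nonneg, measureReal_le_one⟩

variable [SFinite P]

lemma measurable_sectionMass (hS : MeasurableSet S) : Measurable (sectionMass P S) :=
  (measurable_measure_prodMk_left hS).ennreal_toReal

lemma integrable_and_integral_mul_sectionMass (hS : MeasurableSet S) {ψ : Ω → ℝ}
    (hψ : IntegrableOn (fun q : Ω × Ω => ψ q.1) S (P.prod P)) :
    Integrable (fun z => ψ z * sectionMass P S z) P ∧
      ∫ z, ψ z * sectionMass P S z ∂P = ∫ q in S, ψ q.1 ∂(P.prod P) := by
  have hsection : ∀ z, ∫ w, S.indicator (fun q : Ω × Ω => ψ q.1) (z, w) ∂P =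
      ψ z * sectionMass P S z := fun z => by
    rw [sectionMass, mul_comm, ← smul_eq_mul,
      ← integral_indicator_const (ψ z) (measurable_prodMk_left hS)]
    rfl
  rw [← integrable_indicator_iff hS] at hψ
  simp only [← hsection]
  exact ⟨hψ.integral_prod_left, by rw [← integral_prod _ hψ, integral_indicator hS]⟩

lemma setIntegral_comp_swap (hS : Prod.swap ⁻¹' S = S) (f : Ω × Ω → ℝ) :
    ∫ q in S, f q.swap ∂(P.prod P) = ∫ q in S, f q ∂(P.prod P) := by
  conv_lhs => rw [← hS]
  exact Measure.measurePreserving_swap.setIntegral_preimage_emb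
    MeasurableEquiv.prodComm.measurableEmbedding f S

lemma measure_eq_zero_of_setIntegral_nonneg (hS : MeasurableSet S) (hswap : Prod.swap ⁻¹' S = S)
    {f : Ω × Ω → ℝ} (hf : IntegrableOn f S (P.prod P)) (hf_int : 0 ≤ ∫ q in S, f q ∂(P.prod P))
    (hf_neg : ∀ q ∈ S, f q + f q.swap < 0) : P.prod P S = 0 := by
  have hf_swap : IntegrableOn (fun q => f q.swap) S (P.prod P) := by
    rw [← hswap]
    exact (Measure.measurePreserving_swap.integrableOn_comp_preimage
      MeasurableEquiv.prodComm.measurableEmbedding).2 hf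
  have hsum_int : 0 ≤ ∫ q in S, f q + f q.swap ∂(P.prod P) := by
    rw [integral_add hf hf_swap, setIntegral_comp_swap hswap]
    exact add_nonneg hf_int hf_int
  have hneg_intble : IntegrableOn (fun q => -(f q + f q.swap)) S (P.prod P) :=
    (hf.add hf_swap).neg
  by_contra hpos
  have hneg_int : 0 < ∫ q in S, -(f q + f q.swap) ∂(P.prod P) := by
    rw [setIntegral_pos_iff_support_of_nonneg_ae _ hneg_intble]
    · refine (pos_iff_ne_zero.2 hpos).trans_le (measure_mono fun q hq => ⟨?_, hq⟩)
      exact (neg_pos.2 (hf_neg q hq)).ne'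
    · exact (ae_restrict_iff' hS).2 (ae_of_all _ fun q hq => (neg_pos.2 (hf_neg q hq)).le)
  rw [integral_neg] at hneg_int
  linarith

lemma integrable_sectionMass [IsProbabilityMeasure P] (hS : MeasurableSet S) :
    Integrable (sectionMass P S) P :=
  .of_mem_Icc 0 1 (measurable_sectionMass hS).aemeasurable (ae_of_all _ sectionMass_mem_Icc)

end SectionMass

variable [MeasurableSpace X] [MeasurableSpace Y] {μ : Measure X} {ν : Measure Y}
  [IsProbabilityMeasure μ] [IsProbabilityMeasure ν] {S : Set ((X × Y) × (X × Y))}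

lemma univ_mem_cylinders : univ ∈ cylinders X Y :=
  Or.inl ⟨univ, MeasurableSet.univ, preimage_univ⟩

lemma measurableSet_of_mem_cylinders {S : Set (X × Y)} (hS : S ∈ cylinders X Y) :
    MeasurableSet S := by
  rcases hS with ⟨A, hA, rfl⟩ | ⟨B, hB, rfl⟩
  exacts [measurable_fst hA, measurable_snd hB]

lemma measurePreserving_cross :
    MeasurePreserving cross ((μ.prod ν).prod (μ.prod ν)) ((μ.prod ν).prod (μ.prod ν)) := by
  have hinner : MeasurePreserving (fun r : Y × (X × Y) => (r.2.2, (r.2.1, r.1)))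
      (ν.prod (μ.prod ν)) (ν.prod (μ.prod ν)) :=
    Measure.measurePreserving_swap.comp <| (measurePreserving_prodAssoc μ ν ν).symm.comp <|
      ((MeasurePreserving.id μ).prod Measure.measurePreserving_swap).comp <|
        (measurePreserving_prodAssoc μ ν ν).comp Measure.measurePreserving_swap
  exact (measurePreserving_prodAssoc μ ν (μ.prod ν)).symm.comp <|
    ((MeasurePreserving.id μ).prod hinner).comp (measurePreserving_prodAssoc μ ν (μ.prod ν))

lemma integrable_and_integral_exchange (hS : MeasurableSet S) {u l : X × Y → ℝ}
    (hu : IntegrableOn (fun q => u (cross q).1) S ((μ.prod ν).prod (μ.prod ν)))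
    (hl : IntegrableOn (fun q => l q.1) S ((μ.prod ν).prod (μ.prod ν))) :
    Integrable (fun z => u z * sectionMass (μ.prod ν) (cross ⁻¹' S) z -
        l z * sectionMass (μ.prod ν) S z) (μ.prod ν) ∧
      ∫ z, u z * sectionMass (μ.prod ν) (cross ⁻¹' S) z - l z * sectionMass (μ.prod ν) S z
          ∂(μ.prod ν) =
        ∫ q in S, u (cross q).1 - l q.1 ∂((μ.prod ν).prod (μ.prod ν)) := by
  have hcross := measurePreserving_cross (μ := μ) (ν := ν)
  have hemb : MeasurableEmbedding (cross : (X × Y) × (X × Y) → _) :=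
    (MeasurableEquiv.ofInvolutive cross cross_involutive hcross.measurable).measurableEmbedding
  obtain ⟨hui, hu_eq⟩ := integrable_and_integral_mul_sectionMass (P := μ.prod ν)
    (hcross.measurable hS) ((hcross.integrableOn_comp_preimage hemb).2 hu)
  obtain ⟨hli, hl_eq⟩ := integrable_and_integral_mul_sectionMass hS hl
  refine ⟨hui.sub hli, ?_⟩
  rw [integral_sub hui hli, integral_sub hu hl, hu_eq, hl_eq]
  exact congrArg (· - _) (hcross.setIntegral_preimage_emb hemb (fun q => u (cross q).1) S)

lemma setIntegral_sectionMass_cross_sub (hS : MeasurableSet S) (hswap : Prod.swap ⁻¹' S = S)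
    {C : Set (X × Y)} (hC : C ∈ cylinders X Y) :
    ∫ z in C, (sectionMass (μ.prod ν) (cross ⁻¹' S) z - sectionMass (μ.prod ν) S z) ∂(μ.prod ν) =
      0 := by
  have hCm := measurableSet_of_mem_cylinders hC
  have hind : IntegrableOn (fun q => C.indicator (1 : X × Y → ℝ) q.1) S
      ((μ.prod ν).prod (μ.prod ν)) :=
    (((integrable_const (1 : ℝ)).indicator hCm).comp_fst _).integrableOn
  have hind_cross : IntegrableOn (fun q => C.indicator (1 : X × Y → ℝ) (cross q).1) S
      ((μ.prod ν).prod (μ.prod ν)) :=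
    (measurePreserving_cross.integrable_comp_of_integrable
      (((integrable_const (1 : ℝ)).indicator hCm).comp_fst _)).integrableOn
  calc ∫ z in C, (sectionMass (μ.prod ν) (cross ⁻¹' S) z - sectionMass (μ.prod ν) S z) ∂(μ.prod ν)
      = ∫ z, C.indicator 1 z * sectionMass (μ.prod ν) (cross ⁻¹' S) z -
          C.indicator 1 z * sectionMass (μ.prod ν) S z ∂(μ.prod ν) := by
        rw [← integral_indicator hCm]
        refine integral_congr_ae (ae_of_all _ fun z => ?_)
        by_cases hz : z ∈ C <;> simp [hz]
    _ = ∫ q in S, C.indicator 1 (cross q).1 - C.indicator 1 q.1 ∂((μ.prod ν).prod (μ.prod ν)) :=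
        (integrable_and_integral_exchange hS hind_cross hind).2
    _ = 0 := by
        rw [integral_sub hind_cross hind, sub_eq_zero]
        rcases hC with ⟨_, _, rfl⟩ | ⟨B, _, rfl⟩
        · rfl
        · exact setIntegral_comp_swap hswap fun q => (Prod.snd ⁻¹' B).indicator 1 q.1

variable {c Z : X × Y → ℝ} {ε : ℝ}

lemma measurable_marginalCost (hc : Measurable c) (hZ : Measurable Z) (t : ℝ) :
    Measurable (marginalCost c ε Z t) :=
  hc.add ((hZ.add_const t).log.const_mul ε)

-- The competitor is `Z + t h`, where `h` moves the mass of `S` from `q` to `cross q`.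
lemma setIntegral_exchange_nonneg (hc : Measurable c) (hc₀ : ∀ z, 0 ≤ c z) (hε : 0 ≤ ε)
    (hZ : IsCouplingDensity μ ν Z) (hfin : entropicCost (μ.prod ν) c ε Z ≠ ∞)
    (hmin : IsMinOn (entropicCost (μ.prod ν) c ε) {Z | IsCouplingDensity μ ν Z} Z)
    (hS : MeasurableSet S) (hswap : Prod.swap ⁻¹' S = S) {t : ℝ} (ht : 0 < t)
    (hSt : ∀ q ∈ S, 2 * t ≤ Z q.1)
    (hu : IntegrableOn (fun q => marginalCost c ε Z t (cross q).1) S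
      ((μ.prod ν).prod (μ.prod ν)))
    (hl : IntegrableOn (fun q => marginalCost c ε Z (-t) q.1) S ((μ.prod ν).prod (μ.prod ν))) :
    0 ≤ ∫ q in S, marginalCost c ε Z t (cross q).1 - marginalCost c ε Z (-t) q.1
      ∂((μ.prod ν).prod (μ.prod ν)) := by
  set a := sectionMass (μ.prod ν) (cross ⁻¹' S)
  set b := sectionMass (μ.prod ν) S
  have hcrossS := measurePreserving_cross (μ := μ) (ν := ν).measurable hS
  have hstep := fun z => nonneg_and_klFun_add_le (hZ.nonneg z) ht
    (sectionMass_mem_Icc z : a z ∈ _).1 (sectionMass_mem_Icc z).2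
    (sectionMass_mem_Icc z : b z ∈ _).1 (sectionMass_mem_Icc z).2
    fun hb => (sectionMass_ne_zero hb).elim fun w hw => hSt _ hw
  obtain ⟨hGi, hG⟩ := integrable_and_integral_exchange hS hu hl
  have hopt := hZ.integral_nonneg_of_isMinOn hc hc₀ hε hfin hmin
    (hZ.add_const_mul ((measurable_sectionMass hcrossS).sub (measurable_sectionMass hS))
      ((integrable_sectionMass hcrossS).sub (integrable_sectionMass hS))
      (fun C hC => setIntegral_sectionMass_cross_sub hS hswap hC) fun z => (hstep z).1)
    (hGi.const_mul t) fun z => ?_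
  · rw [integral_const_mul, hG] at hopt
    exact nonneg_of_mul_nonneg_right hopt ht
  · have := mul_le_mul_of_nonneg_left (hstep z).2 hε
    simp only [marginalCost, Pi.sub_apply, ← sub_eq_add_neg]
    linarith

lemma measure_eq_zero_of_exchange_lt (hc : Measurable c) (hc₀ : ∀ z, 0 ≤ c z) (hε : 0 ≤ ε)
    (hZ : IsCouplingDensity μ ν Z) (hfin : entropicCost (μ.prod ν) c ε Z ≠ ∞)
    (hmin : IsMinOn (entropicCost (μ.prod ν) c ε) {Z | IsCouplingDensity μ ν Z} Z)
    (hS : MeasurableSet S) (hswap : Prod.swap ⁻¹' S = S) {t : ℝ} (ht : 0 < t)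
    (hSt : ∀ q ∈ S, 2 * t ≤ Z q.1) {M : ℝ}
    (hSu : ∀ q ∈ S, |marginalCost c ε Z t (cross q).1| ≤ M)
    (hSl : ∀ q ∈ S, |marginalCost c ε Z (-t) q.1| ≤ M)
    (hlt : ∀ q ∈ S, marginalCost c ε Z t (cross q).1 + marginalCost c ε Z t (cross q).2 <
      marginalCost c ε Z (-t) q.1 + marginalCost c ε Z (-t) q.2) :
    ((μ.prod ν).prod (μ.prod ν)) S = 0 := by
  have hu : IntegrableOn (fun q => marginalCost c ε Z t (cross q).1) S
      ((μ.prod ν).prod (μ.prod ν)) :=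
    Measure.integrableOn_of_bounded (measure_ne_top _ _)
      ((measurable_marginalCost hc hZ.measurable t).comp
        (measurable_fst.comp
          (measurePreserving_cross (μ := μ) (ν := ν)).measurable)).aestronglyMeasurable
      ((ae_restrict_iff' hS).2 (ae_of_all _ hSu))
  have hl : IntegrableOn (fun q => marginalCost c ε Z (-t) q.1) S
      ((μ.prod ν).prod (μ.prod ν)) :=
    Measure.integrableOn_of_bounded (measure_ne_top _ _)
      ((measurable_marginalCost hc hZ.measurable (-t)).comp measurable_fst).aestronglyMeasurable
      ((ae_restrict_iff' hS).2 (ae_of_all _ hSl))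
  refine measure_eq_zero_of_setIntegral_nonneg hS hswap (hu.sub hl)
    (setIntegral_exchange_nonneg hc hc₀ hε hZ hfin hmin hS hswap ht hSt hu hl) fun q hq => ?_
  have : marginalCost c ε Z t (cross q).1 + marginalCost c ε Z t (cross q.swap).1 <
    marginalCost c ε Z (-t) q.1 + marginalCost c ε Z (-t) q.swap.1 := hlt q hq
  simp only [Pi.sub_apply]
  linarith

lemma ae_exchange_le (hc : Measurable c) (hc₀ : ∀ z, 0 ≤ c z) (hε : 0 ≤ ε)
    (hZ : IsCouplingDensity μ ν Z) (hfin : entropicCost (μ.prod ν) c ε Z ≠ ∞)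
    (hmin : IsMinOn (entropicCost (μ.prod ν) c ε) {Z | IsCouplingDensity μ ν Z} Z)
    {t : ℝ} (ht : 0 < t) :
    ∀ᵐ q ∂((μ.prod ν).prod (μ.prod ν)), 2 * t ≤ Z q.1 → 2 * t ≤ Z q.2 →
      marginalCost c ε Z (-t) q.1 + marginalCost c ε Z (-t) q.2 ≤
        marginalCost c ε Z t (cross q).1 + marginalCost c ε Z t (cross q).2 := by
  have hu : Measurable fun q : (X × Y) × (X × Y) => marginalCost c ε Z t (cross q).1 :=
    (measurable_marginalCost hc hZ.measurable t).comp
      (measurable_fst.comp (measurePreserving_cross (μ := μ) (ν := ν)).measurable)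
  have hl : Measurable fun q : (X × Y) × (X × Y) => marginalCost c ε Z (-t) q.1 :=
    (measurable_marginalCost hc hZ.measurable (-t)).comp measurable_fst
  let T (M : ℕ) : Set ((X × Y) × (X × Y)) :=
    {q | 2 * t ≤ Z q.1 ∧ |marginalCost c ε Z t (cross q).1| ≤ M ∧
      |marginalCost c ε Z (-t) q.1| ≤ M}
  let V : Set ((X × Y) × (X × Y)) :=
    {q | marginalCost c ε Z t (cross q).1 + marginalCost c ε Z t (cross q.swap).1 <
      marginalCost c ε Z (-t) q.1 + marginalCost c ε Z (-t) q.swap.1}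
  have hT : ∀ M, MeasurableSet (T M) := fun M =>
    (measurableSet_le measurable_const (hZ.measurable.comp measurable_fst)).inter
      ((measurableSet_le hu.abs measurable_const).inter (measurableSet_le hl.abs measurable_const))
  have hV : MeasurableSet V :=
    measurableSet_lt (hu.add (hu.comp measurable_swap)) (hl.add (hl.comp measurable_swap))
  have hnull : ∀ M, ((μ.prod ν).prod (μ.prod ν)) (T M ∩ Prod.swap ⁻¹' T M ∩ V) = 0 := fun M => by
    refine measure_eq_zero_of_exchange_lt hc hc₀ hε hZ hfin hmin
      (((hT M).inter (measurable_swap (hT M))).inter hV) ?_ ht (fun q hq => hq.1.1.1)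
      (fun q hq => hq.1.1.2.1) (fun q hq => hq.1.1.2.2) fun q hq => hq.2
    ext q
    simp only [V, mem_preimage, mem_inter_iff, Prod.swap_swap, mem_ofPred_eq,
      add_comm (marginalCost c ε Z _ q.swap.1), add_comm (marginalCost c ε Z _ (cross q.swap).1),
      and_comm (a := q ∈ T M)]
  filter_upwards [ae_all_iff.2 fun M => measure_eq_zero_iff_ae_notMem.1 (hnull M)] with q hq h₁ h₂
  by_contra! hlt
  obtain ⟨M, hM⟩ := exists_nat_ge (max (max |marginalCost c ε Z t (cross q).1|
    |marginalCost c ε Z (-t) q.1|) (max |marginalCost c ε Z t (cross q).2|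
    |marginalCost c ε Z (-t) q.2|))
  simp only [max_le_iff] at hM
  exact hq M ⟨⟨⟨h₁, hM.1⟩, ⟨h₂, hM.2⟩⟩, hlt⟩

lemma ae_gibbsDensity_mul_le (hc : Measurable c) (hc₀ : ∀ z, 0 ≤ c z) (hε : 0 < ε)
    (hZ : IsCouplingDensity μ ν Z) (hfin : entropicCost (μ.prod ν) c ε Z ≠ ∞)
    (hmin : IsMinOn (entropicCost (μ.prod ν) c ε) {Z | IsCouplingDensity μ ν Z} Z) :
    ∀ᵐ q ∂((μ.prod ν).prod (μ.prod ν)), gibbsDensity c ε Z q.1 * gibbsDensity c ε Z q.2 ≤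
      gibbsDensity c ε Z (cross q).1 * gibbsDensity c ε Z (cross q).2 := by
  filter_upwards [ae_all_iff.2 fun n : ℕ => ae_exchange_le hc hc₀ hε.le hZ hfin hmin
    (Nat.one_div_pos_of_nat (n := n))] with q hq
  have hG₀ : ∀ z, 0 ≤ gibbsDensity c ε Z z := fun z => mul_nonneg (Real.exp_pos _).le (hZ.nonneg z)
  rcases (hZ.nonneg q.1).eq_or_lt with h₁ | h₁
  · simpa [gibbsDensity, ← h₁] using mul_nonneg (hG₀ (cross q).1) (hG₀ (cross q).2)
  rcases (hZ.nonneg q.2).eq_or_lt with h₂ | h₂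
  · simpa [gibbsDensity, ← h₂] using mul_nonneg (hG₀ (cross q).1) (hG₀ (cross q).2)
  have ht : Tendsto (fun n : ℕ => 1 / ((n : ℝ) + 1)) atTop (𝓝 0) :=
    tendsto_one_div_add_atTop_nhds_zero_nat
  have hlim : ∀ z, Tendsto (fun t => Real.exp (c z / ε) * (Z z + t)) (𝓝 0)
      (𝓝 (gibbsDensity c ε Z z)) := fun z =>
    Continuous.tendsto' (by fun_prop) _ _ (by simp [gibbsDensity])
  have ht_neg := ht.neg
  rw [neg_zero] at ht_neg
  refine le_of_tendsto_of_tendsto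
    (((hlim q.1).comp ht_neg).mul ((hlim q.2).comp ht_neg))
    (((hlim (cross q).1).comp ht).mul ((hlim (cross q).2).comp ht)) ?_
  filter_upwards [ht.eventually_lt_const (half_pos h₁), ht.eventually_lt_const (half_pos h₂)]
    with n hn₁ hn₂
  have ht₀ : 0 < 1 / ((n : ℝ) + 1) := Nat.one_div_pos_of_nat
  have hexp := Real.exp_le_exp.2 <|
    div_le_div_of_nonneg_right (hq n (by linarith) (by linarith)) hε.le
  rwa [add_div, add_div, Real.exp_add, Real.exp_add, exp_marginalCost_div hε.ne' (by linarith),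
    exp_marginalCost_div hε.ne' (by linarith),
    exp_marginalCost_div hε.ne' (add_pos_of_nonneg_of_pos (hZ.nonneg _) ht₀),
    exp_marginalCost_div hε.ne' (add_pos_of_nonneg_of_pos (hZ.nonneg _) ht₀)] at hexp

lemma ae_gibbsDensity_mul_eq (hc : Measurable c) (hc₀ : ∀ z, 0 ≤ c z) (hε : 0 < ε)
    (hZ : IsCouplingDensity μ ν Z) (hfin : entropicCost (μ.prod ν) c ε Z ≠ ∞)
    (hmin : IsMinOn (entropicCost (μ.prod ν) c ε) {Z | IsCouplingDensity μ ν Z} Z) :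
    ∀ᵐ q ∂((μ.prod ν).prod (μ.prod ν)), gibbsDensity c ε Z q.1 * gibbsDensity c ε Z q.2 =
      gibbsDensity c ε Z (cross q).1 * gibbsDensity c ε Z (cross q).2 := by
  have hle := ae_gibbsDensity_mul_le hc hc₀ hε hZ hfin hmin
  filter_upwards [hle, measurePreserving_cross.quasiMeasurePreserving.ae hle] with q hq hq'
  exact hq.antisymm hq'

end Exchange

section Factorization

variable [MeasurableSpace X] [MeasurableSpace Y] {μ : Measure X} {ν : Measure Y}
  {c : X × Y → ℝ} {ε : ℝ}

/-- The exponential form `exp (f x + g y - c(x,y) / ε)` of the density of a cyclically invariant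
coupling, with Schrödinger potentials `f` and `g`. -/
def schrodingerDensity (c : X × Y → ℝ) (ε : ℝ) (f : X → ℝ) (g : Y → ℝ) (z : X × Y) : ℝ :=
  Real.exp (f z.1 + g z.2 - c z / ε)

lemma measurable_schrodingerDensity (hc : Measurable c) {f : X → ℝ} {g : Y → ℝ}
    (hf : Measurable f) (hg : Measurable g) : Measurable (schrodingerDensity c ε f g) :=
  (((hf.comp measurable_fst).add (hg.comp measurable_snd)).sub (hc.div_const ε)).exp

-- Freeze the second point of the pair at a generic `z₀` with `W z₀ ≠ 0`.
lemma exists_ae_eq_mul_of_cross [SFinite μ] [SFinite ν] {W : X × Y → ℝ} (hW : Measurable W)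
    (hW₀ : ∀ z, 0 ≤ W z) (hW_ne : ¬ W =ᵐ[μ.prod ν] 0)
    (hcross : ∀ᵐ q ∂((μ.prod ν).prod (μ.prod ν)),
      W q.1 * W q.2 = W (cross q).1 * W (cross q).2) :
    ∃ (F : X → ℝ) (G : Y → ℝ), Measurable F ∧ Measurable G ∧ (∀ x, 0 ≤ F x) ∧ (∀ y, 0 ≤ G y) ∧
      W =ᵐ[μ.prod ν] fun z => F z.1 * G z.2 := by
  have hslice := Measure.ae_ae_of_ae_prod
    (Measure.measurePreserving_swap.quasiMeasurePreserving.ae hcross)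
  obtain ⟨z₀, hz₀, hz₀_cross⟩ := (not_eventually.1 hW_ne).and_eventually hslice |>.exists
  refine ⟨fun x => W (x, z₀.2) / W z₀, fun y => W (z₀.1, y),
    (hW.comp measurable_prodMk_right).div_const _, hW.comp measurable_prodMk_left,
    fun x => div_nonneg (hW₀ _) (hW₀ _), fun y => hW₀ _, ?_⟩
  filter_upwards [hz₀_cross] with z hz
  rw [div_mul_eq_mul_div]
  exact (eq_div_iff hz₀).2 hz

lemma exists_ae_eq_schrodingerDensity [IsProbabilityMeasure μ] [IsProbabilityMeasure ν]
    {Z : X × Y → ℝ} (hc : Measurable c) (hc₀ : ∀ z, 0 ≤ c z) (hε : 0 < ε)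
    (hZ : IsCouplingDensity μ ν Z) (hfin : entropicCost (μ.prod ν) c ε Z ≠ ∞)
    (hmin : IsMinOn (entropicCost (μ.prod ν) c ε) {Z | IsCouplingDensity μ ν Z} Z) :
    ∃ (f : X → ℝ) (g : Y → ℝ), Measurable f ∧ Measurable g ∧
      Z =ᵐ[μ.prod ν] schrodingerDensity c ε f g := by
  have hZ_eq : ∀ z, Z z = gibbsDensity c ε Z z * Real.exp (-(c z / ε)) := fun z => by
    rw [gibbsDensity, mul_right_comm, ← Real.exp_add, add_neg_cancel, Real.exp_zero, one_mul]
  have hG_ne : ¬ gibbsDensity c ε Z =ᵐ[μ.prod ν] 0 := fun hG₀ => by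
    have := hZ.measure_eq_zero univ_mem_cylinders <| hG₀.mono fun z hz _ => by
      rw [hZ_eq, hz, Pi.zero_apply, zero_mul]
    simp at this
  obtain ⟨F, G, hF, hG, hF₀, hG₀, hFG⟩ := exists_ae_eq_mul_of_cross
    ((hc.div_const ε).exp.mul hZ.measurable)
    (fun z => mul_nonneg (Real.exp_pos _).le (hZ.nonneg z)) hG_ne
    (ae_gibbsDensity_mul_eq hc hc₀ hε hZ hfin hmin)
  have hZFG : ∀ᵐ z ∂(μ.prod ν), Z z = F z.1 * G z.2 * Real.exp (-(c z / ε)) :=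
    hFG.mono fun z hz => by rw [hZ_eq]; exact congrArg (· * _) hz
  have hF_ne : ∀ᵐ z ∂(μ.prod ν), F z.1 ≠ 0 := measure_eq_zero_iff_ae_notMem.1 <|
    hZ.measure_eq_zero
      (Or.inl ⟨F ⁻¹' {0}, hF (measurableSet_singleton 0), rfl⟩) <| hZFG.mono fun z hz hz₀ => by
        rw [hz, show F z.1 = 0 from hz₀, zero_mul, zero_mul]
  have hG_ne : ∀ᵐ z ∂(μ.prod ν), G z.2 ≠ 0 := measure_eq_zero_iff_ae_notMem.1 <|
    hZ.measure_eq_zero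
      (Or.inr ⟨G ⁻¹' {0}, hG (measurableSet_singleton 0), rfl⟩) <| hZFG.mono fun z hz hz₀ => by
        rw [hz, show G z.2 = 0 from hz₀, mul_zero, zero_mul]
  refine ⟨fun x => Real.log (F x), fun y => Real.log (G y), hF.log, hG.log, ?_⟩
  filter_upwards [hZFG, hF_ne, hG_ne] with z hz hFz hGz
  rw [hz, schrodingerDensity, sub_eq_add_neg, Real.exp_add, Real.exp_add,
    Real.exp_log ((hF₀ _).lt_of_ne' hFz), Real.exp_log ((hG₀ _).lt_of_ne' hGz)]

end Factorization

section CyclicalInvariance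

variable {c : X → Y → ℝ} {ε : ℝ}

lemma prod_schrodingerDensity (f : X → ℝ) (g : Y → ℝ) (k : ℕ) (x : Fin (k + 1) → X)
    (y : Fin (k + 1) → Y) :
    ∏ i, schrodingerDensity (Function.uncurry c) ε f g (x i, y i) =
      Real.exp (-(1 / ε) * (∑ i, c (x i) (y i) - ∑ i, c (x i) (y (i + 1)))) *
        ∏ i, schrodingerDensity (Function.uncurry c) ε f g (x i, y (i + 1)) := by
  have hshift : ∑ i, g (y (i + 1)) = ∑ i, g (y i) :=
    Equiv.sum_comp (Equiv.addRight (1 : Fin (k + 1))) fun i => g (y i)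
  simp only [schrodingerDensity, Function.uncurry_apply_pair, ← Real.exp_sum, ← Real.exp_add,
    Finset.sum_sub_distrib, Finset.sum_add_distrib, ← Finset.sum_div, hshift]
  congr 1
  ring

-- The potentials are read off the cyclical identity for the two points `(x, y)` and `(x₀, y₀)`.
lemma eq_schrodingerDensity_of_pair {D : X × Y → ℝ} (hD : ∀ z, 0 < D z) {x₀ : X} {y₀ : Y}
    (hpair : ∀ x y, D (x, y) * D (x₀, y₀) =
      Real.exp (-(1 / ε) * (c x y + c x₀ y₀ - (c x y₀ + c x₀ y))) * (D (x, y₀) * D (x₀, y))) :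
    D = schrodingerDensity (Function.uncurry c) ε (fun x => Real.log (D (x, y₀)) + c x y₀ / ε)
      fun y => Real.log (D (x₀, y)) + c x₀ y / ε - (Real.log (D (x₀, y₀)) + c x₀ y₀ / ε) := by
  funext ⟨x, y⟩
  have hlog := congrArg Real.log (hpair x y)
  rw [Real.log_mul (hD _).ne' (hD _).ne', Real.log_mul (Real.exp_ne_zero _)
    (mul_pos (hD _) (hD _)).ne', Real.log_mul (hD _).ne' (hD _).ne', Real.log_exp] at hlog
  rw [schrodingerDensity, ← Real.exp_log (hD (x, y))]
  simp only [Function.uncurry_apply_pair, eq_sub_of_add_eq hlog]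
  congr 1
  ring

variable [MeasurableSpace X] [MeasurableSpace Y] {μ : Measure X} {ν : Measure Y}
  {π : Measure (X × Y)}

lemma isCyclInvariant_iff_exists_schrodingerDensity [Nonempty X] [Nonempty Y]
    (hc : Measurable (Function.uncurry c)) :
    IsCyclInvariant c ε μ ν π ↔ IsCoupling μ ν π ∧
      ∃ (f : X → ℝ) (g : Y → ℝ), Measurable f ∧ Measurable g ∧
        π = (μ.prod ν).withDensity fun z =>
          ENNReal.ofReal (schrodingerDensity (Function.uncurry c) ε f g z) := by
  refine and_congr_right fun _ => ⟨?_, ?_⟩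
  · rintro ⟨D, hDm, hD, hπ, hcycl⟩
    inhabit X
    inhabit Y
    have hpair : ∀ x y, D (x, y) * D (default, default) =
        Real.exp (-(1 / ε) * (c x y + c default default - (c x default + c default y))) *
          (D (x, default) * D (default, y)) := fun x y => by
      simpa [Fin.prod_univ_two, Fin.sum_univ_two] using hcycl 1 ![x, default] ![y, default]
    rw [eq_schrodingerDensity_of_pair hD hpair] at hπ
    have hx := (measurable_prodMk_right : Measurable fun x : X => (x, (default : Y)))
    have hy := (measurable_prodMk_left : Measurable fun y : Y => ((default : X), y))
    exact ⟨_, _, (hDm.comp hx).log.add ((hc.comp hx).div_const ε),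
      ((hDm.comp hy).log.add ((hc.comp hy).div_const ε)).sub_const _, hπ⟩
  · rintro ⟨f, g, hf, hg, hπ⟩
    exact ⟨_, measurable_schrodingerDensity hc hf hg, fun z => Real.exp_pos _, hπ,
      prod_schrodingerDensity f g⟩

end CyclicalInvariance

section Uniqueness

lemma arctan_add_mul_exp_sub_pos {a b r s : ℝ} (h : r - s = a + b) (hrs : r ≠ s) :
    0 < (Real.arctan a + Real.arctan b) * (Real.exp r - Real.exp s) := by
  have harctan : Real.arctan a + Real.arctan b = Real.arctan a - Real.arctan (-b) := by
    rw [Real.arctan_neg, sub_neg_eq_add]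
  rw [harctan]
  rcases hrs.lt_or_gt with hlt | hlt
  · exact mul_pos_of_neg_of_neg (sub_neg.2 (Real.arctan_strictMono (by linarith)))
      (sub_neg.2 (Real.exp_lt_exp.2 hlt))
  · exact mul_pos (sub_pos.2 (Real.arctan_strictMono (by linarith)))
      (sub_pos.2 (Real.exp_lt_exp.2 hlt))

variable [MeasurableSpace X] [MeasurableSpace Y] {μ : Measure X} {ν : Measure Y}

lemma IsCoupling.integrable_and_integral_add {π : Measure (X × Y)} (hπ : IsCoupling μ ν π)
    {a : X → ℝ} {b : Y → ℝ} (ha : Integrable a μ) (hb : Integrable b ν) :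
    Integrable (fun z => a z.1 + b z.2) π ∧
      ∫ z, a z.1 + b z.2 ∂π = ∫ x, a x ∂μ + ∫ y, b y ∂ν := by
  obtain ⟨-, rfl, rfl⟩ := hπ
  have ha' := ha.comp_measurable measurable_fst
  have hb' := hb.comp_measurable measurable_snd
  refine ⟨ha'.add hb', ?_⟩
  rw [integral_map measurable_fst.aemeasurable ha.aestronglyMeasurable,
    integral_map measurable_snd.aemeasurable hb.aestronglyMeasurable]
  exact integral_add ha' hb'

lemma IsCoupling.integrable_and_integral_add_mul {D : X × Y → ℝ} (hD : Measurable D)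
    (hD₀ : ∀ z, 0 ≤ D z)
    (hπ : IsCoupling μ ν ((μ.prod ν).withDensity fun z => ENNReal.ofReal (D z)))
    {a : X → ℝ} {b : Y → ℝ} (ha : Integrable a μ) (hb : Integrable b ν) :
    Integrable (fun z => (a z.1 + b z.2) * D z) (μ.prod ν) ∧
      ∫ z, (a z.1 + b z.2) * D z ∂(μ.prod ν) = ∫ x, a x ∂μ + ∫ y, b y ∂ν := by
  have hlt : ∀ᵐ z ∂(μ.prod ν), ENNReal.ofReal (D z) < ∞ := ae_of_all _ fun _ =>
    ENNReal.ofReal_lt_top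
  have hab := hπ.integrable_and_integral_add ha hb
  rw [integrable_withDensity_iff hD.ennreal_ofReal hlt,
    integral_withDensity_eq_integral_toReal_smul hD.ennreal_ofReal hlt] at hab
  simpa only [ENNReal.toReal_ofReal (hD₀ _), smul_eq_mul, mul_comm (D _)] using hab

lemma integrable_arctan_comp [IsFiniteMeasure μ] {a : X → ℝ} (ha : Measurable a) :
    Integrable (fun x => Real.arctan (a x)) μ :=
  .of_mem_Icc (-(Real.pi / 2)) (Real.pi / 2) (Real.measurable_arctan.comp ha).aemeasurable
    (ae_of_all _ fun _ => ⟨(Real.neg_pi_div_two_lt_arctan _).le, (Real.arctan_lt_pi_div_two _).le⟩)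

-- Both couplings give the same integral to `arctan (f₁ - f₂) + arctan (g₁ - g₂)`, a bounded
-- function whose sign is that of the difference of the densities.
lemma schrodingerDensity_ae_eq [IsFiniteMeasure μ] [IsFiniteMeasure ν] {c : X × Y → ℝ} {ε : ℝ}
    (hc : Measurable c) {f₁ f₂ : X → ℝ} {g₁ g₂ : Y → ℝ} (hf₁ : Measurable f₁)
    (hf₂ : Measurable f₂) (hg₁ : Measurable g₁) (hg₂ : Measurable g₂)
    (hπ₁ : IsCoupling μ ν
      ((μ.prod ν).withDensity fun z => ENNReal.ofReal (schrodingerDensity c ε f₁ g₁ z)))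
    (hπ₂ : IsCoupling μ ν
      ((μ.prod ν).withDensity fun z => ENNReal.ofReal (schrodingerDensity c ε f₂ g₂ z))) :
    schrodingerDensity c ε f₁ g₁ =ᵐ[μ.prod ν] schrodingerDensity c ε f₂ g₂ := by
  have ha : Integrable (fun x => Real.arctan (f₁ x - f₂ x)) μ :=
    integrable_arctan_comp (hf₁.sub hf₂)
  have hb : Integrable (fun y => Real.arctan (g₁ y - g₂ y)) ν :=
    integrable_arctan_comp (hg₁.sub hg₂)
  obtain ⟨hi₁, h₁⟩ := hπ₁.integrable_and_integral_add_mul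
    (measurable_schrodingerDensity hc hf₁ hg₁) (fun _ => (Real.exp_pos _).le) ha hb
  obtain ⟨hi₂, h₂⟩ := hπ₂.integrable_and_integral_add_mul
    (measurable_schrodingerDensity hc hf₂ hg₂) (fun _ => (Real.exp_pos _).le) ha hb
  have hpos : ∀ z : X × Y, schrodingerDensity c ε f₁ g₁ z ≠ schrodingerDensity c ε f₂ g₂ z →
      0 < (Real.arctan (f₁ z.1 - f₂ z.1) + Real.arctan (g₁ z.2 - g₂ z.2)) *
        (schrodingerDensity c ε f₁ g₁ z - schrodingerDensity c ε f₂ g₂ z) := fun z hz =>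
    arctan_add_mul_exp_sub_pos (by ring) fun h => hz (congrArg Real.exp h)
  have hi : Integrable (fun z => (Real.arctan (f₁ z.1 - f₂ z.1) + Real.arctan (g₁ z.2 - g₂ z.2)) *
      (schrodingerDensity c ε f₁ g₁ z - schrodingerDensity c ε f₂ g₂ z)) (μ.prod ν) := by
    simp only [mul_sub]
    exact hi₁.sub hi₂
  have hdiff := integral_sub hi₁ hi₂
  simp only [h₁, h₂, sub_self, ← mul_sub] at hdiff
  rw [integral_eq_zero_iff_of_nonneg _ hi] at hdiff
  · filter_upwards [hdiff] with z hz
    by_contra hne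
    exact (hpos z hne).ne' hz
  · intro z
    by_cases hz : schrodingerDensity c ε f₁ g₁ z = schrodingerDensity c ε f₂ g₂ z
    · simp [hz]
    · exact (hpos z hz).le

lemma IsCyclInvariant.eq [IsProbabilityMeasure μ] [IsProbabilityMeasure ν] {c : X → Y → ℝ} {ε : ℝ}
    (hc : Measurable (Function.uncurry c)) {π₁ π₂ : Measure (X × Y)}
    (hπ₁ : IsCyclInvariant c ε μ ν π₁) (hπ₂ : IsCyclInvariant c ε μ ν π₂) : π₁ = π₂ := by
  have := nonempty_of_isProbabilityMeasure μ
  have := nonempty_of_isProbabilityMeasure ν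
  rw [isCyclInvariant_iff_exists_schrodingerDensity hc] at hπ₁ hπ₂
  obtain ⟨hπ₁, f₁, g₁, hf₁, hg₁, rfl⟩ := hπ₁
  obtain ⟨hπ₂, f₂, g₂, hf₂, hg₂, rfl⟩ := hπ₂
  exact withDensity_congr_ae <|
    (schrodingerDensity_ae_eq hc hf₁ hf₂ hg₁ hg₂ hπ₁ hπ₂).mono fun z hz =>
      congrArg ENNReal.ofReal hz

end Uniqueness

section Objective

open InformationTheory

lemma exists_eq_withDensity_ofReal {Ω : Type*} [MeasurableSpace Ω] {π P : Measure Ω} [SigmaFinite π]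
    [SigmaFinite P] (hπ : π ≪ P) :
    ∃ Z : Ω → ℝ, Measurable Z ∧ (∀ z, 0 ≤ Z z) ∧
      π = P.withDensity fun z => ENNReal.ofReal (Z z) := by
  refine ⟨fun z => (π.rnDeriv P z).toReal, (Measure.measurable_rnDeriv π P).ennreal_toReal,
    fun _ => ENNReal.toReal_nonneg, ?_⟩
  conv_lhs => rw [← Measure.withDensity_rnDeriv_eq π P hπ]
  exact withDensity_congr_ae <| (Measure.rnDeriv_lt_top π P).mono fun z hz =>
    (ENNReal.ofReal_toReal hz.ne).symm

lemma relEntropy_eq_klDiv {Ω : Type*} [MeasurableSpace Ω] (π P : Measure Ω)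
    [IsProbabilityMeasure π] [IsProbabilityMeasure P] : relEntropy π P = (klDiv π P : EReal) := by
  rw [relEntropy]
  split_ifs with h
  · rw [← EReal.coe_toReal (EReal.coe_ennreal_eq_top_iff.ne.2 (klDiv_ne_top h.1 h.2))
      (EReal.coe_ennreal_ne_bot _), EReal.toReal_coe_ennreal,
      toReal_klDiv_of_measure_eq h.1 (by simp)]
    rfl
  · rw [show klDiv π P = ∞ from not_not.1 (mt klDiv_ne_top_iff.1 h), EReal.coe_ennreal_top]

lemma klDiv_withDensity_ofReal {Ω : Type*} [MeasurableSpace Ω] {P : Measure Ω} [IsFiniteMeasure P]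
    {Z : Ω → ℝ} (hZ : Measurable Z) (hZ₀ : ∀ z, 0 ≤ Z z)
    [IsFiniteMeasure (P.withDensity fun z => ENNReal.ofReal (Z z))] :
    klDiv (P.withDensity fun z => ENNReal.ofReal (Z z)) P =
      ∫⁻ z, ENNReal.ofReal (klFun (Z z)) ∂P := by
  rw [klDiv_eq_lintegral_klFun_of_ac (withDensity_absolutelyContinuous _ _)]
  refine lintegral_congr_ae <| (Measure.rnDeriv_withDensity P hZ.ennreal_ofReal).mono fun z hz => ?_
  simp only [hz, ENNReal.toReal_ofReal (hZ₀ z)]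

variable [MeasurableSpace X] [MeasurableSpace Y] {μ : Measure X} {ν : Measure Y}
  [IsProbabilityMeasure μ] [IsProbabilityMeasure ν] {c : X → Y → ℝ} {ε : ℝ}

lemma isCoupling_iff_forall_cylinders {π : Measure (X × Y)} :
    IsCoupling μ ν π ↔ ∀ S ∈ cylinders X Y, π S = μ.prod ν S := by
  constructor
  · rintro ⟨-, hfst, hsnd⟩ S (⟨A, hA, rfl⟩ | ⟨B, hB, rfl⟩)
    · rw [← Measure.map_apply measurable_fst hA, hfst,
        measurePreserving_fst.measure_preimage hA.nullMeasurableSet]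
    · rw [← Measure.map_apply measurable_snd hB, hsnd,
        measurePreserving_snd.measure_preimage hB.nullMeasurableSet]
  · intro hπ
    refine ⟨⟨by rw [hπ univ univ_mem_cylinders, measure_univ]⟩, ?_, ?_⟩
    · ext A hA
      rw [Measure.map_apply measurable_fst hA, hπ _ (Or.inl ⟨A, hA, rfl⟩),
        measurePreserving_fst.measure_preimage hA.nullMeasurableSet]
    · ext B hB
      rw [Measure.map_apply measurable_snd hB, hπ _ (Or.inr ⟨B, hB, rfl⟩),
        measurePreserving_snd.measure_preimage hB.nullMeasurableSet]

lemma IsCoupling.isCouplingDensity {Z : X × Y → ℝ} (hZ : Measurable Z) (hZ₀ : ∀ z, 0 ≤ Z z)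
    (hπ : IsCoupling μ ν ((μ.prod ν).withDensity fun z => ENNReal.ofReal (Z z))) :
    IsCouplingDensity μ ν Z where
  measurable := hZ
  nonneg := hZ₀
  integrable := by
    have := hπ.1
    refine (lintegral_ofReal_ne_top_iff_integrable hZ.aestronglyMeasurable (ae_of_all _ hZ₀)).1 ?_
    rw [← setLIntegral_univ, ← withDensity_apply _ MeasurableSet.univ]
    exact measure_ne_top _ _
  setIntegral_eq S hS := by
    rw [integral_eq_lintegral_of_nonneg_ae (ae_of_all _ hZ₀) hZ.aestronglyMeasurable,
      ← withDensity_apply _ (measurableSet_of_mem_cylinders hS),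
      isCoupling_iff_forall_cylinders.1 hπ S hS, measureReal_def]

lemma IsCouplingDensity.isCoupling {Z : X × Y → ℝ} (hZ : IsCouplingDensity μ ν Z) :
    IsCoupling μ ν ((μ.prod ν).withDensity fun z => ENNReal.ofReal (Z z)) :=
  isCoupling_iff_forall_cylinders.2 fun S hS => by
    rw [withDensity_apply _ (measurableSet_of_mem_cylinders hS),
      ← ofReal_integral_eq_lintegral_ofReal hZ.integrable.integrableOn (ae_of_all _ hZ.nonneg),
      hZ.setIntegral_eq S hS, ofReal_measureReal]

lemma eotObj_eq_coe (hε : 0 ≤ ε) (π : Measure (X × Y)) [IsProbabilityMeasure π] :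
    eotObj c ε μ ν π =
      ((transportCost c π + ENNReal.ofReal ε * klDiv π (μ.prod ν) : ℝ≥0∞) : EReal) := by
  rw [eotObj, relEntropy_eq_klDiv, EReal.coe_ennreal_add, EReal.coe_ennreal_mul,
    EReal.coe_ennreal_ofReal, max_eq_left hε]

lemma eotObj_withDensity (hc : Measurable (Function.uncurry c)) (hc₀ : ∀ x y, 0 ≤ c x y)
    (hε : 0 ≤ ε) {Z : X × Y → ℝ} (hZ : IsCouplingDensity μ ν Z) :
    eotObj c ε μ ν ((μ.prod ν).withDensity fun z => ENNReal.ofReal (Z z)) =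
      (entropicCost (μ.prod ν) (Function.uncurry c) ε Z : EReal) := by
  have := hZ.isCoupling.1
  have hcZ : Measurable fun z => ENNReal.ofReal (Function.uncurry c z * Z z) :=
    (hc.mul hZ.measurable).ennreal_ofReal
  have htransport : transportCost c ((μ.prod ν).withDensity fun z => ENNReal.ofReal (Z z)) =
      ∫⁻ z, ENNReal.ofReal (Function.uncurry c z * Z z) ∂(μ.prod ν) :=
    (lintegral_withDensity_eq_lintegral_mul _ hZ.measurable.ennreal_ofReal
      hc.ennreal_ofReal).trans <| lintegral_congr fun z => by
        rw [Pi.mul_apply, ← ENNReal.ofReal_mul (hZ.nonneg z), mul_comm]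
  rw [eotObj_eq_coe hε, htransport, klDiv_withDensity_ofReal hZ.measurable hZ.nonneg,
    ← lintegral_const_mul' _ _ ENNReal.ofReal_ne_top, ← lintegral_add_left hcZ, entropicCost]
  refine congrArg _ (lintegral_congr fun z => ?_)
  rw [← ENNReal.ofReal_mul hε]
  exact (ENNReal.ofReal_add (mul_nonneg (hc₀ z.1 z.2) (hZ.nonneg z))
    (mul_nonneg hε (klFun_nonneg (hZ.nonneg z)))).symm

lemma IsCoupling.exists_isCouplingDensity (hε : 0 < ε) {π : Measure (X × Y)}
    (hπ : IsCoupling μ ν π) (hfin : eotObj c ε μ ν π ≠ ⊤) :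
    ∃ Z, IsCouplingDensity μ ν Z ∧ π = (μ.prod ν).withDensity fun z => ENNReal.ofReal (Z z) := by
  have := hπ.1
  rw [eotObj_eq_coe hε.le, EReal.coe_ennreal_eq_top_iff.ne, ENNReal.add_ne_top] at hfin
  have hac : π ≪ μ.prod ν := (klDiv_ne_top_iff.1 fun htop => hfin.2 <| by
    rw [htop, ENNReal.mul_top (ENNReal.ofReal_pos.2 hε).ne']).1
  obtain ⟨Z, hZ, hZ₀, rfl⟩ := exists_eq_withDensity_ofReal hac
  exact ⟨Z, hπ.isCouplingDensity hZ hZ₀, rfl⟩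

lemma IsCoupling.eotObj_ne_top {π : Measure (X × Y)} (hπ : IsCoupling μ ν π) (hε : 0 ≤ ε)
    (hfin : (transportCost c π : EReal) + relEntropy π (μ.prod ν) ≠ ⊤) :
    eotObj c ε μ ν π ≠ ⊤ := by
  have := hπ.1
  rw [relEntropy_eq_klDiv, ← EReal.coe_ennreal_add, EReal.coe_ennreal_eq_top_iff.ne,
    ENNReal.add_ne_top] at hfin
  rw [eotObj_eq_coe hε, EReal.coe_ennreal_eq_top_iff.ne]
  exact ENNReal.add_ne_top.2 ⟨hfin.1, ENNReal.mul_ne_top ENNReal.ofReal_ne_top hfin.2⟩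

end Objective

section Minimizers

variable [MeasurableSpace X] [MeasurableSpace Y] {μ : Measure X} {ν : Measure Y}
  [IsProbabilityMeasure μ] [IsProbabilityMeasure ν] {c : X → Y → ℝ} {ε : ℝ}

lemma isMinOn_eotObj_withDensity_iff (hc : Measurable (Function.uncurry c))
    (hc₀ : ∀ x y, 0 ≤ c x y) (hε : 0 < ε) {Z : X × Y → ℝ} (hZ : IsCouplingDensity μ ν Z) :
    IsMinOn (eotObj c ε μ ν) {π | IsCoupling μ ν π}
        ((μ.prod ν).withDensity fun z => ENNReal.ofReal (Z z)) ↔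
      IsMinOn (entropicCost (μ.prod ν) (Function.uncurry c) ε) {Z | IsCouplingDensity μ ν Z} Z := by
  rw [isMinOn_iff, isMinOn_iff, eotObj_withDensity hc hc₀ hε.le hZ]
  constructor
  · intro hmin W (hW : IsCouplingDensity μ ν W)
    rw [← EReal.coe_ennreal_le_coe_ennreal_iff, ← eotObj_withDensity hc hc₀ hε.le hW]
    exact hmin _ hW.isCoupling
  · intro hmin π (hπ : IsCoupling μ ν π)
    rcases eq_or_ne (eotObj c ε μ ν π) ⊤ with htop | hfin
    · exact htop ▸ le_top
    · obtain ⟨W, hW, rfl⟩ := hπ.exists_isCouplingDensity hε hfin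
      rw [eotObj_withDensity hc hc₀ hε.le hW]
      exact EReal.coe_ennreal_le_coe_ennreal_iff.2 (hmin W hW)

theorem exists_isMinOn_eotObj (hc : Measurable (Function.uncurry c)) (hc₀ : ∀ x y, 0 ≤ c x y)
    (hε : 0 < ε) (hfin : ∃ π, IsCoupling μ ν π ∧ eotObj c ε μ ν π ≠ ⊤) :
    ∃ π, IsCoupling μ ν π ∧ IsMinOn (eotObj c ε μ ν) {π | IsCoupling μ ν π} π := by
  obtain ⟨π₁, hπ₁, hfin₁⟩ := hfin
  obtain ⟨Z₁, hZ₁, rfl⟩ := hπ₁.exists_isCouplingDensity hε hfin₁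
  rw [eotObj_withDensity hc hc₀ hε.le hZ₁, EReal.coe_ennreal_eq_top_iff.ne] at hfin₁
  obtain ⟨Z, hZ : IsCouplingDensity μ ν Z, hmin⟩ := exists_isMinOn_entropicCost
    univ_mem_cylinders hc (fun z => hc₀ z.1 z.2) hε ⟨Z₁, hZ₁, hfin₁⟩
  exact ⟨_, hZ.isCoupling, (isMinOn_eotObj_withDensity_iff hc hc₀ hε hZ).2 hmin⟩

theorem IsCoupling.isCyclInvariant_of_isMinOn (hc : Measurable (Function.uncurry c))
    (hc₀ : ∀ x y, 0 ≤ c x y) (hε : 0 < ε) {π : Measure (X × Y)} (hπ : IsCoupling μ ν π)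
    (hfin : eotObj c ε μ ν π ≠ ⊤) (hmin : IsMinOn (eotObj c ε μ ν) {π | IsCoupling μ ν π} π) :
    IsCyclInvariant c ε μ ν π := by
  have := nonempty_of_isProbabilityMeasure μ
  have := nonempty_of_isProbabilityMeasure ν
  obtain ⟨Z, hZ, rfl⟩ := hπ.exists_isCouplingDensity hε hfin
  rw [eotObj_withDensity hc hc₀ hε.le hZ, EReal.coe_ennreal_eq_top_iff.ne] at hfin
  obtain ⟨f, g, hf, hg, hZ_eq⟩ := exists_ae_eq_schrodingerDensity hc (fun z => hc₀ z.1 z.2) hε hZ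
    hfin ((isMinOn_eotObj_withDensity_iff hc hc₀ hε hZ).1 hmin)
  exact (isCyclInvariant_iff_exists_schrodingerDensity hc).2 ⟨hπ, f, g, hf, hg,
    withDensity_congr_ae <| hZ_eq.mono fun z hz => congrArg ENNReal.ofReal hz⟩

end Minimizers

theorem stmt1_general [MeasurableSpace X] [MeasurableSpace Y] (μ : Measure X) (ν : Measure Y)
    [IsProbabilityMeasure μ] [IsProbabilityMeasure ν]
    (c : X → Y → ℝ) (hc : Measurable fun p : X × Y => c p.1 p.2) (hc0 : ∀ x y, 0 ≤ c x y)
    (ε : ℝ) (hε : 0 < ε)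
    (hfin : ∃ π, IsCoupling μ ν π ∧
      (transportCost c π : EReal) + relEntropy π (μ.prod ν) ≠ ⊤) :
    (∀ π, IsCoupling μ ν π →
      (IsCyclInvariant c ε μ ν π ↔
        ∀ π', IsCoupling μ ν π' → eotObj c ε μ ν π ≤ eotObj c ε μ ν π')) ∧
    ∃! π : Measure (X × Y), IsCyclInvariant c ε μ ν π := by
  obtain ⟨π₁, hπ₁, hfin₁⟩ := hfin
  have hπ₁_ne := hπ₁.eotObj_ne_top hε.le hfin₁
  obtain ⟨π₀, hπ₀, hmin₀⟩ := exists_isMinOn_eotObj hc hc0 hε ⟨π₁, hπ₁, hπ₁_ne⟩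
  have hcycl : ∀ π, IsCoupling μ ν π → IsMinOn (eotObj c ε μ ν) {π | IsCoupling μ ν π} π →
      IsCyclInvariant c ε μ ν π := fun π hπ hmin =>
    hπ.isCyclInvariant_of_isMinOn hc hc0 hε (ne_top_of_le_ne_top hπ₁_ne (hmin hπ₁)) hmin
  have h₀ := hcycl π₀ hπ₀ hmin₀
  exact ⟨fun π hπ => ⟨fun h => h.eq hc h₀ ▸ hmin₀, hcycl π hπ⟩, π₀, h₀, fun π h => h.eq hc h₀⟩

section Statement

variable {X Y : Type*}
  [MeasurableSpace X] [TopologicalSpace X] [PolishSpace X] [BorelSpace X]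
  [MeasurableSpace Y] [TopologicalSpace Y] [PolishSpace Y] [BorelSpace Y]

/-- under finiteness, cyclical invariance ⟺ minimality, and
there exists a unique such coupling. -/
theorem stmt1 (μ : Measure X) (ν : Measure Y)
    [IsProbabilityMeasure μ] [IsProbabilityMeasure ν]
    (c : X → Y → ℝ) (hc : Measurable fun p : X × Y => c p.1 p.2) (hc0 : ∀ x y, 0 ≤ c x y)
    (ε : ℝ) (hε : 0 < ε)
    (hfin : ∃ π, IsCoupling μ ν π ∧
      (transportCost c π : EReal) + relEntropy π (μ.prod ν) ≠ ⊤) :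
    (∀ π, IsCoupling μ ν π →
      (IsCyclInvariant c ε μ ν π ↔
        ∀ π', IsCoupling μ ν π' → eotObj c ε μ ν π ≤ eotObj c ε μ ν π')) ∧
    ∃! π : Measure (X × Y), IsCyclInvariant c ε μ ν π :=
  stmt1_general μ ν c hc hc0 ε hε hfin

end Statement

end EOT
end
end

section
/- Let k ≥ 2, 0 ≤ δ ≤ δ' ≤ ∞, and define A_k(δ,δ') as the set of k-tuples ((x_1,y_1),…,(x_k,y_k)) ∈ (X×Y)^k satisfying δ ≤ Σ_{i=1}^k c(x_i,y_i) − Σ_{i=1}^k c(x_i,y_{i+1}) ≤ δ' (with y_{k+1} := y_1). Let A ⊂ A_k(δ,δ') be Borel and let π_ε^k denote the k-fold product measure of π_ε with itself. Then: (i) π_ε^k(A) ≤ e^{−δ/ε} for all ε > 0; (ii) if the reflected set Ā := {((x_1,y_2),(x_2,y_3),…,(x_k,y_1)) : ((x_1,y_1),…,(x_k,y_k)) ∈ A} satisfies liminf_{ε→0} ε log π_ε^k(Ā) = 0, then liminf_{ε→0} ε log π_ε^k(A) ≥ −δ'. -/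
open MeasureTheory Filter Topology Set
open scoped ENNReal

noncomputable section

namespace EOT

variable {X Y : Type*}

section Statement

variable {X Y : Type*}
  [MeasurableSpace X] [MetricSpace X] [PolishSpace X] [BorelSpace X]
  [MeasurableSpace Y] [MetricSpace Y] [PolishSpace Y] [BorelSpace Y]

/-!
Multiplying the densities along a cycle, cyclical invariance says that `π^k` has density
`exp (-gap / ε)` with respect to the law of the *reflected* cycle: the reflection permutes the
`Y`-coordinates, hence preserves `(μ ⊗ ν)^k`. Bounds on the gap over `A` therefore compare
`π^k(A)` with `π^k(Ā)` up to the corresponding exponential factor.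
-/

section Reflection

variable {ι X Y : Type*} [MeasurableSpace X] [MeasurableSpace Y]

/-- Permutation of the second coordinates of a family of pairs: the family `p` is sent to
`i ↦ ((p i).1, (p (σ i)).2)`. As a measurable equivalence it transports measures in
both directions. -/
def permuteSnd (σ : Equiv.Perm ι) : (ι → X × Y) ≃ᵐ (ι → X × Y) where
  toFun p i := ((p i).1, (p (σ i)).2)
  invFun p i := ((p i).1, (p (σ.symm i)).2)
  left_inv p := by simp
  right_inv p := by simp
  measurable_toFun := by
    change Measurable fun (p : ι → X × Y) (i : ι) => ((p i).1, (p (σ i)).2)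
    fun_prop
  measurable_invFun := by
    change Measurable fun (p : ι → X × Y) (i : ι) => ((p i).1, (p (σ.symm i)).2)
    fun_prop

theorem measurePreserving_permuteSnd [Fintype ι] (σ : Equiv.Perm ι) (μ : Measure X)
    (ν : Measure Y) [SigmaFinite μ] [SigmaFinite ν] :
    MeasurePreserving (permuteSnd σ) (Measure.pi fun _ : ι => μ.prod ν)
      (Measure.pi fun _ : ι => μ.prod ν) := by
  have hsplit := measurePreserving_arrowProdEquivProdArrow X Y ι (fun _ => μ) (fun _ => ν)
  have hperm := measurePreserving_arrowCongr' (fun _ : ι => ν) (fun _ : ι => ν) σ.symm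
    (MeasurableEquiv.refl Y) (fun _ => MeasurePreserving.id ν)
  exact (hsplit.symm _).comp (((MeasurePreserving.id _).prod hperm).comp hsplit)

/-- The reflection `((x₁,y₁),…,(x_k,y_k)) ↦ ((x₁,y₂),…,(x_k,y₁))` of cycles; the number of points
is `k + 1`, so that addition in `Fin (k + 1)` wraps around. -/
def reflect (X Y : Type*) [MeasurableSpace X] [MeasurableSpace Y] (k : ℕ) :
    (Fin (k + 1) → X × Y) ≃ᵐ (Fin (k + 1) → X × Y) :=
  permuteSnd (Equiv.addRight 1)

/-- The cost gap `∑ c(x_i,y_i) - ∑ c(x_i,y_{i+1})` of a cycle of `k + 1` points, whose bounds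
define the sets `A_k(δ,δ')`. -/
def cyclicGap (c : X → Y → ℝ) {k : ℕ} (p : Fin (k + 1) → X × Y) : ℝ :=
  (∑ i, c (p i).1 (p i).2) - ∑ i, c (p i).1 (p (i + 1)).2

end Reflection

section Transport

variable {α β : Type*} [MeasurableSpace α] [MeasurableSpace β] {ν : Measure β} {e : α ≃ᵐ β}

theorem map_symm_apply (s : Set α) : ν.map e.symm s = ν (e '' s) := by
  rw [e.symm.map_apply, e.image_eq_preimage_symm]

theorem map_symm_withDensity {μ : Measure α} (he : MeasurePreserving e μ ν) (f : β → ℝ≥0∞) :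
    (ν.withDensity f).map e.symm = μ.withDensity (f ∘ e) := by
  ext s hs
  rw [e.symm.map_apply, withDensity_apply _ (e.symm.measurable hs), withDensity_apply _ hs,
    ← he.setLIntegral_comp_preimage_emb e.measurableEmbedding, ← preimage_comp, e.symm_comp_self,
    preimage_id]
  rfl

end Transport

section Product

variable {ι : Type*} [Fintype ι] {Z : ι → Type*}

theorem indicator_univ_pi_prod (s : ∀ i, Set (Z i)) (g : ∀ i, Z i → ℝ≥0∞) :
    (univ.pi s).indicator (fun z => ∏ i, g i (z i)) =
      fun z => ∏ i, (s i).indicator (g i) (z i) := by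
  classical
  ext z
  by_cases hz : ∀ i, z i ∈ s i
  · simp [indicator, hz]
  · obtain ⟨i, hi⟩ := not_forall.1 hz
    rw [indicator_of_notMem (by simpa using hz),
      Finset.prod_eq_zero (Finset.mem_univ i) (indicator_of_notMem hi _)]

variable [∀ i, MeasurableSpace (Z i)] (P : ∀ i, Measure (Z i)) [∀ i, IsProbabilityMeasure (P i)]
  {g : ∀ i, Z i → ℝ≥0∞}

theorem lintegral_pi_prod (hg : ∀ i, Measurable (g i)) :
    ∫⁻ z, ∏ i, g i (z i) ∂Measure.pi P = ∏ i, ∫⁻ x, g i x ∂P i := by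
  rw [ProbabilityTheory.lintegral_prod_eq_prod_lintegral_of_indepFun Finset.univ
    (fun i (z : ∀ i, Z i) => g i (z i))
    (ProbabilityTheory.iIndepFun_pi fun i => (hg i).aemeasurable)
    fun i => (hg i).comp (measurable_pi_apply i)]
  exact Finset.prod_congr rfl fun i _ => (measurePreserving_eval P i).lintegral_comp (hg i)

theorem pi_withDensity (hg : ∀ i, Measurable (g i))
    [∀ i, SigmaFinite ((P i).withDensity (g i))] :
    (Measure.pi fun i => (P i).withDensity (g i)) =
      (Measure.pi P).withDensity fun z => ∏ i, g i (z i) := by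
  refine Measure.pi_eq fun s hs => ?_
  have hs' : MeasurableSet (univ.pi s) := .univ_pi hs
  rw [withDensity_apply _ hs', ← lintegral_indicator hs', indicator_univ_pi_prod,
    lintegral_pi_prod P fun i => (hg i).indicator (hs i)]
  exact Finset.prod_congr rfl fun i _ => by
    rw [lintegral_indicator (hs i), withDensity_apply _ (hs i)]

end Product

section Exponential

theorem exp_neg_div_le_exp_neg_div {ε : ℝ} (hε : 0 ≤ ε) {a b : EReal} (h : a ≤ b) :
    EReal.exp (-b / ε) ≤ EReal.exp (-a / ε) :=
  EReal.exp_le_exp_iff.2 <| EReal.div_le_div_right_of_nonneg (EReal.coe_nonneg.2 hε) <|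
    EReal.neg_le_neg_iff.2 h

theorem neg_add_mul_log_le {ε : ℝ} (hε : 0 < ε) {d : EReal} {a b : ℝ≥0∞}
    (h : EReal.exp (-d / ε) * a ≤ b) :
    -d + ε * ENNReal.log a ≤ ε * ENNReal.log b := by
  have hε' : (0 : EReal) ≤ ε := EReal.coe_nonneg.2 hε.le
  calc -d + ε * ENNReal.log a = ε * (-d / ε + ENNReal.log a) := by
        rw [EReal.left_distrib_of_nonneg_of_ne_top hε' (EReal.coe_ne_top _),
          EReal.mul_div_cancel (EReal.coe_ne_bot _) (EReal.coe_ne_top _)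
            (EReal.coe_ne_zero.2 hε.ne')]
    _ = ε * ENNReal.log (EReal.exp (-d / ε) * a) := by
        rw [ENNReal.log_mul_add, EReal.log_exp]
    _ ≤ ε * ENNReal.log b := mul_le_mul_of_nonneg_left (ENNReal.log_le_log h) hε'

theorem neg_add_liminf_mul_log_le {d : EReal} {a b : ℝ → ℝ≥0∞}
    (h : ∀ ε : ℝ, 0 < ε → EReal.exp (-d / ε) * a ε ≤ b ε) :
    -d + liminf (fun ε : ℝ => (ε : EReal) * ENNReal.log (a ε)) (𝓝[>] 0) ≤
      liminf (fun ε : ℝ => (ε : EReal) * ENNReal.log (b ε)) (𝓝[>] 0) := by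
  have hev : ∀ᶠ ε : ℝ in 𝓝[>] 0,
      -d + ε * ENNReal.log (a ε) ≤ ε * ENNReal.log (b ε) :=
    eventually_mem_nhdsWithin.mono fun ε hε => neg_add_mul_log_le hε (h ε hε)
  calc -d + liminf (fun ε : ℝ => (ε : EReal) * ENNReal.log (a ε)) (𝓝[>] 0)
      = liminf (fun _ : ℝ => -d) (𝓝[>] 0) +
          liminf (fun ε : ℝ => (ε : EReal) * ENNReal.log (a ε)) (𝓝[>] 0) := by rw [liminf_const]
    _ ≤ liminf (fun ε : ℝ => -d + ε * ENNReal.log (a ε)) (𝓝[>] 0) := EReal.le_liminf_add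
    _ ≤ liminf (fun ε : ℝ => (ε : EReal) * ENNReal.log (b ε)) (𝓝[>] 0) := liminf_le_liminf hev

end Exponential

section CyclicInvariance

variable {X Y : Type*} [MeasurableSpace X] [MeasurableSpace Y] {μ : Measure X} {ν : Measure Y}
  {π : Measure (X × Y)}

theorem IsCoupling.isProbabilityMeasure_fst (h : IsCoupling μ ν π) : IsProbabilityMeasure μ := by
  obtain ⟨_, rfl, -⟩ := h
  exact Measure.isProbabilityMeasure_map measurable_fst.aemeasurable

theorem IsCoupling.isProbabilityMeasure_snd (h : IsCoupling μ ν π) : IsProbabilityMeasure ν := by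
  obtain ⟨_, -, rfl⟩ := h
  exact Measure.isProbabilityMeasure_map measurable_snd.aemeasurable

namespace IsCyclInvariant

variable {c : X → Y → ℝ} {ε : ℝ} {k : ℕ} {A : Set (Fin (k + 1) → X × Y)} {d : EReal}

theorem exists_pi_density (h : IsCyclInvariant c ε μ ν π) (k : ℕ) :
    ∃ F : (Fin (k + 1) → X × Y) → ℝ≥0∞, Measurable F ∧ (∀ p, F p ≠ 0) ∧ (∀ p, F p ≠ ∞) ∧
      (Measure.pi fun _ => π) = (Measure.pi fun _ => μ.prod ν).withDensity F ∧
      ∀ p, F p = EReal.exp (-cyclicGap c p / ε) * F (reflect X Y k p) := by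
  have := h.1.isProbabilityMeasure_fst
  have := h.1.isProbabilityMeasure_snd
  obtain ⟨⟨_, -, -⟩, D, hD, hpos, rfl, hcyc⟩ := h
  refine ⟨fun p => ∏ i, ENNReal.ofReal (D (p i)), by fun_prop,
    fun p => Finset.prod_ne_zero_iff.2 fun i _ => by simpa using hpos (p i),
    fun p => ENNReal.prod_ne_top fun i _ => ENNReal.ofReal_ne_top,
    pi_withDensity _ fun _ => hD.ennreal_ofReal, fun p => ?_⟩
  have hexp : EReal.exp (-cyclicGap c p / ε) =
      ENNReal.ofReal (Real.exp (-(1 / ε) * cyclicGap c p)) := by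
    rw [← EReal.exp_coe, neg_mul, one_div_mul_eq_div, ← neg_div, EReal.coe_div, EReal.coe_neg]
  beta_reduce
  rw [hexp, ← ENNReal.ofReal_prod_of_nonneg fun i _ => (hpos _).le,
    ← ENNReal.ofReal_prod_of_nonneg fun i _ => (hpos _).le,
    ← ENNReal.ofReal_mul (Real.exp_pos _).le]
  exact congrArg ENNReal.ofReal (hcyc k (fun i => (p i).1) fun i => (p i).2)

theorem measurable_exp_neg_cyclicGap (h : IsCyclInvariant c ε μ ν π) (k : ℕ) :
    Measurable fun p : Fin (k + 1) → X × Y => EReal.exp (-cyclicGap c p / ε) := by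
  obtain ⟨F, hF, hF0, hFtop, -, hcyc⟩ := h.exists_pi_density k
  have hdiv : (fun p : Fin (k + 1) → X × Y => EReal.exp (-cyclicGap c p / ε)) =
      fun p => F p / F (reflect X Y k p) :=
    funext fun p => (ENNReal.eq_div_iff (hF0 _) (hFtop _)).2 (by rw [hcyc p, mul_comm])
  rw [hdiv]
  exact hF.div (hF.comp (reflect X Y k).measurable)

theorem pi_eq_withDensity_map_reflect (h : IsCyclInvariant c ε μ ν π) (k : ℕ) :
    (Measure.pi fun _ : Fin (k + 1) => π) =
      ((Measure.pi fun _ => π).map (reflect X Y k).symm).withDensity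
        fun p => EReal.exp (-cyclicGap c p / ε) := by
  have := h.1.isProbabilityMeasure_fst
  have := h.1.isProbabilityMeasure_snd
  obtain ⟨F, hF, -, -, hπ, hcyc⟩ := h.exists_pi_density k
  rw [hπ, map_symm_withDensity (e := reflect X Y k) (measurePreserving_permuteSnd _ μ ν),
    ← withDensity_mul _ (hF.comp (reflect X Y k).measurable) (h.measurable_exp_neg_cyclicGap k)]
  congr 1
  exact funext fun p => (hcyc p).trans (mul_comm _ _)

theorem pi_apply_eq_setLIntegral (h : IsCyclInvariant c ε μ ν π)
    (A : Set (Fin (k + 1) → X × Y)) :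
    (Measure.pi fun _ => π) A =
      ∫⁻ p in A, EReal.exp (-cyclicGap c p / ε)
        ∂(Measure.pi fun _ => π).map (reflect X Y k).symm := by
  have := h.1.1
  have : IsProbabilityMeasure ((Measure.pi fun _ => π).map (reflect X Y k).symm) :=
    Measure.isProbabilityMeasure_map (reflect X Y k).symm.measurable.aemeasurable
  rw [← withDensity_apply' _ A, ← h.pi_eq_withDensity_map_reflect k]

theorem pi_le_exp_mul_pi_reflect (h : IsCyclInvariant c ε μ ν π) (hε : 0 ≤ ε)
    (hd : ∀ p ∈ A, d ≤ cyclicGap c p) :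
    (Measure.pi fun _ => π) A ≤
      EReal.exp (-d / ε) * (Measure.pi fun _ => π) (reflect X Y k '' A) := by
  rw [h.pi_apply_eq_setLIntegral A, ← map_symm_apply, ← setLIntegral_const]
  exact setLIntegral_mono measurable_const fun p hp => exp_neg_div_le_exp_neg_div hε (hd p hp)

theorem exp_mul_pi_reflect_le_pi (h : IsCyclInvariant c ε μ ν π) (hε : 0 ≤ ε)
    (hd : ∀ p ∈ A, cyclicGap c p ≤ d) :
    EReal.exp (-d / ε) * (Measure.pi fun _ => π) (reflect X Y k '' A) ≤
      (Measure.pi fun _ => π) A := by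
  rw [h.pi_apply_eq_setLIntegral A, ← map_symm_apply, ← setLIntegral_const]
  exact setLIntegral_mono (h.measurable_exp_neg_cyclicGap k) fun p hp =>
    exp_neg_div_le_exp_neg_div hε (hd p hp)

end IsCyclInvariant

theorem stmt2_general {c : X → Y → ℝ} {πε : ℝ → Measure (X × Y)}
    (hπε : ∀ ε, 0 < ε → IsCyclInvariant c ε μ ν (πε ε)) {k : ℕ} {δ δ' : EReal}
    {A : Set (Fin (k + 1) → X × Y)} (hδ : ∀ p ∈ A, δ ≤ cyclicGap c p)
    (hδ' : ∀ p ∈ A, cyclicGap c p ≤ δ') :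
    (∀ ε, 0 < ε → (Measure.pi fun _ => πε ε) A ≤ EReal.exp (-δ / ε)) ∧
    -δ' + liminf (fun ε : ℝ => (ε : EReal) * ENNReal.log
        ((Measure.pi fun _ => πε ε) (reflect X Y k '' A))) (𝓝[>] 0) ≤
      liminf (fun ε : ℝ => (ε : EReal) * ENNReal.log
        ((Measure.pi fun _ => πε ε) A)) (𝓝[>] 0) := by
  refine ⟨fun ε hε => ?_, neg_add_liminf_mul_log_le fun ε hε =>
    (hπε ε hε).exp_mul_pi_reflect_le_pi hε.le hδ'⟩
  have := (hπε ε hε).1.1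
  exact ((hπε ε hε).pi_le_exp_mul_pi_reflect hε.le hδ).trans (mul_le_of_le_one_right' prob_le_one)

end CyclicInvariance

/-- the basic exponential bound obtained by integrating cyclical invariance. -/
theorem stmt2 (μ : Measure X) (ν : Measure Y)
    [IsProbabilityMeasure μ] [IsProbabilityMeasure ν]
    (c : X → Y → ℝ) (hc : Measurable fun p : X × Y => c p.1 p.2) (hc0 : ∀ x y, 0 ≤ c x y)
    (πε : ℝ → Measure (X × Y)) [∀ ε, IsProbabilityMeasure (πε ε)]
    (hπε : ∀ ε, 0 < ε → IsCyclInvariant c ε μ ν (πε ε))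
    (k : ℕ) (δ : ℝ) (δ' : EReal) (hδ0 : 0 ≤ δ) (hδδ' : (δ : EReal) ≤ δ')
    (A : Set (Fin (k + 2) → X × Y)) (hA : MeasurableSet A)
    (hAsub : ∀ f ∈ A,
      δ ≤ (∑ i, c (f i).1 (f i).2) - (∑ i, c (f i).1 (f (i + 1)).2) ∧
      (((∑ i, c (f i).1 (f i).2) - (∑ i, c (f i).1 (f (i + 1)).2) : ℝ) : EReal) ≤ δ') :
    (∀ ε, 0 < ε →
      (Measure.pi fun _ : Fin (k + 2) => πε ε) A ≤ ENNReal.ofReal (Real.exp (-δ / ε))) ∧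
    ((liminf (fun (ε : ℝ) => (ε : EReal) * ENNReal.log
          ((Measure.pi fun _ : Fin (k + 2) => πε ε)
            ((fun f (i : Fin (k + 2)) => ((f i).1, (f (i + 1)).2)) '' A)))
          (𝓝[>] (0 : ℝ)) = 0) →
      -δ' ≤ liminf (fun (ε : ℝ) => (ε : EReal) * ENNReal.log
          ((Measure.pi fun _ : Fin (k + 2) => πε ε) A)) (𝓝[>] (0 : ℝ))) := by
  obtain ⟨hupper, hlower⟩ := stmt2_general (k := k + 1) (δ := δ) hπε
    (fun f hf => EReal.coe_le_coe (hAsub f hf).1) fun f hf => (hAsub f hf).2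
  exact ⟨hupper, fun hlim => (add_zero (-δ')).symm.trans_le (hlim ▸ hlower)⟩

end Statement

end EOT
end
end

section
/- Let (x,y) ∈ X×Y and suppose there exist k ≥ 2 and points (x_2,y_2),…,(x_k,y_k) in the support of π_* such that δ_0 := Σ_{i=1}^k c(x_i,y_i) − Σ_{i=1}^k c(x_i,y_{i+1}) > 0, where (x_1,y_1) := (x,y) and y_{k+1} := y_1. Then for every δ < δ_0 there exist α, r, ε_0 > 0 such that π_ε(B_r(x,y)) ≤ α e^{−δ/ε} for all ε ≤ ε_0. -/
open MeasureTheory Filter Topology Set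
open scoped ENNReal

noncomputable section

namespace EOT

variable {X Y : Type*}

/-! Raise `π_ε` to a product measure over the whole cycle. Its density is `∏ dπ_ε/dP (xᵢ, yᵢ)`, and
cyclical invariance compares this with the density at the recoupled cycle `(xᵢ, yᵢ₊₁)`, at the price
of the factor `exp (-gain / ε)`. Recoupling preserves the product of the reference measures
`P = μ ⊗ ν`, so cycles of gain at least `δ` have total mass at most `exp (-δ / ε)`. A product of
small balls around the given points consists of such cycles, and the balls around support points
keep a mass bounded below under weak convergence; hence the remaining ball carries the exponential
decay. -/

theorem withDensity_le_mul_withDensity_univ {Ω Ω' : Type*} [MeasurableSpace Ω]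
    [MeasurableSpace Ω'] {P : Measure Ω} [SFinite P] {Q : Measure Ω'} {T : Ω → Ω'}
    (hT : MeasurePreserving T P Q) {f : Ω → ℝ≥0∞} {g : Ω' → ℝ≥0∞} (hg : Measurable g)
    {S : Set Ω} {C : ℝ≥0∞} (hfg : ∀ ω ∈ S, f ω ≤ C * g (T ω)) :
    P.withDensity f S ≤ C * Q.withDensity g univ := by
  have hgT : Measurable fun ω => g (T ω) := hg.comp hT.measurable
  calc P.withDensity f S
      = ∫⁻ ω in S, f ω ∂P := withDensity_apply' _ _
    _ ≤ ∫⁻ ω in S, C * g (T ω) ∂P := setLIntegral_mono (hgT.const_mul C) hfg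
    _ ≤ ∫⁻ ω, C * g (T ω) ∂P := setLIntegral_le_lintegral _ _
    _ = C * ∫⁻ ω', g ω' ∂Q := by rw [lintegral_const_mul _ hgT, hT.lintegral_comp hg]
    _ = C * Q.withDensity g univ := by rw [withDensity_apply _ .univ, setLIntegral_univ]

section ProductMeasures

variable {ι : Type*} [Fintype ι]

theorem lintegral_pi_prod_eq_prod_lintegral {Z : ι → Type*} [∀ i, MeasurableSpace (Z i)]
    (P : ∀ i, Measure (Z i)) [∀ i, IsProbabilityMeasure (P i)]
    {f : ∀ i, Z i → ℝ≥0∞} (hf : ∀ i, Measurable (f i)) :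
    ∫⁻ q, ∏ i, f i (q i) ∂Measure.pi P = ∏ i, ∫⁻ z, f i z ∂P i := by
  have indep : ProbabilityTheory.iIndepFun (fun i (q : ∀ i, Z i) => f i (q i)) (Measure.pi P) :=
    ProbabilityTheory.iIndepFun_pi fun i => (hf i).aemeasurable
  refine (ProbabilityTheory.lintegral_prod_eq_prod_lintegral_of_indepFun Finset.univ _ indep
    fun i => (hf i).comp (measurable_pi_apply i)).trans ?_
  exact Finset.prod_congr rfl fun i _ => (measurePreserving_eval P i).lintegral_comp (hf i)

theorem pi_withDensity_s4 {Z : ι → Type*} [∀ i, MeasurableSpace (Z i)]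
    (P : ∀ i, Measure (Z i)) [∀ i, IsProbabilityMeasure (P i)]
    {f : ∀ i, Z i → ℝ≥0∞} (hf : ∀ i, Measurable (f i))
    [∀ i, SigmaFinite ((P i).withDensity (f i))] :
    Measure.pi (fun i => (P i).withDensity (f i)) =
      (Measure.pi P).withDensity (fun q => ∏ i, f i (q i)) := by
  refine Measure.pi_eq fun s hs => ?_
  have indicator_prod : (univ.pi s).indicator (fun q => ∏ i, f i (q i)) =
      fun q => ∏ i, (s i).indicator (f i) (q i) := by
    classical
    ext q
    by_cases hq : ∀ i, q i ∈ s i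
    · simp only [indicator_of_mem (mem_univ_pi.2 hq), indicator_of_mem (hq _)]
    · obtain ⟨i, hi⟩ := not_forall.1 hq
      rw [indicator_of_notMem (fun h => hq (mem_univ_pi.1 h)),
        Finset.prod_eq_zero (Finset.mem_univ i) (indicator_of_notMem hi _)]
  calc (Measure.pi P).withDensity (fun q => ∏ i, f i (q i)) (univ.pi s)
      = ∫⁻ q, ∏ i, (s i).indicator (f i) (q i) ∂Measure.pi P := by
        rw [withDensity_apply _ (.univ_pi hs), ← lintegral_indicator (.univ_pi hs), indicator_prod]
    _ = ∏ i, ∫⁻ z, (s i).indicator (f i) z ∂P i :=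
        lintegral_pi_prod_eq_prod_lintegral P fun i => (hf i).indicator (hs i)
    _ = ∏ i, (P i).withDensity (f i) (s i) :=
        Finset.prod_congr rfl fun i _ => by
          rw [lintegral_indicator (hs i), withDensity_apply _ (hs i)]

theorem measurePreserving_pi_prod_permute_snd [MeasurableSpace X] [MeasurableSpace Y]
    (μ : Measure X) (ν : Measure Y) [SigmaFinite μ] [SigmaFinite ν]
    (σ : Equiv.Perm ι) :
    MeasurePreserving (fun (q : ι → X × Y) i => ((q i).1, (q (σ i)).2))
      (Measure.pi fun _ => μ.prod ν) (Measure.pi fun _ => μ.prod ν) := by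
  have split := measurePreserving_arrowProdEquivProdArrow X Y ι (fun _ => μ) (fun _ => ν)
  have permute := measurePreserving_arrowCongr' (fun _ : ι => ν) (fun _ : ι => ν)
    σ.symm (MeasurableEquiv.refl Y) (fun _ => MeasurePreserving.id ν)
  exact (split.symm.comp ((MeasurePreserving.id _).prod permute)).comp split

end ProductMeasures

section WeakConvergence

variable {Z : Type*} [TopologicalSpace Z] [MeasurableSpace Z] [OpensMeasurableSpace Z]
  [HasOuterApproxClosed Z] {π : ℝ → Measure Z} {π₀ : Measure Z} [IsProbabilityMeasure π₀]

theorem TendstoWeakly.eventually_lt_measure_of_isOpen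
    (hconv : TendstoWeakly π π₀) (hπ : ∀ ε, 0 < ε → IsProbabilityMeasure (π ε))
    {U : Set Z} (hU : IsOpen U) {a : ℝ≥0∞} (ha : a < π₀ U) :
    ∀ᶠ ε in 𝓝[>] (0 : ℝ), a < π ε U := by
  let ρ : Ioi (0 : ℝ) → ProbabilityMeasure Z := fun ε => ⟨π ε, hπ ε ε.2⟩
  let ρ₀ : ProbabilityMeasure Z := ⟨π₀, inferInstance⟩
  rw [TendstoWeakly] at hconv
  simp only [← map_coe_Ioi_atBot (0 : ℝ), tendsto_map'_iff, eventually_map] at hconv ⊢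
  have tendsto_ρ : Tendsto ρ atBot (𝓝 ρ₀) :=
    ProbabilityMeasure.tendsto_iff_forall_integral_tendsto.2 hconv
  exact eventually_lt_of_lt_liminf
    (ha.trans_le (ProbabilityMeasure.le_liminf_measure_open_of_tendsto tendsto_ρ hU))

theorem TendstoWeakly.exists_pos_eventually_le_prod_measure {ι : Type*} [Fintype ι]
    (hconv : TendstoWeakly π π₀) (hπ : ∀ ε, 0 < ε → IsProbabilityMeasure (π ε))
    {U : ι → Set Z} (hU : ∀ i, IsOpen (U i)) (hpos : ∀ i, 0 < π₀ (U i)) :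
    ∃ b > (0 : ℝ), ∀ᶠ ε in 𝓝[>] (0 : ℝ), ENNReal.ofReal b ≤ ∏ i, π ε (U i) := by
  choose a a_pos a_lt using fun i => ENNReal.lt_iff_exists_nnreal_btwn.1 (hpos i)
  have prod_pos : 0 < ∏ i, a i := Finset.prod_pos fun i _ => ENNReal.coe_pos.1 (a_pos i)
  refine ⟨∏ i, a i, by exact_mod_cast prod_pos, ?_⟩
  filter_upwards [eventually_all.2 fun i =>
    hconv.eventually_lt_measure_of_isOpen hπ (hU i) (a_lt i)] with ε hε
  rw [← NNReal.coe_prod, ENNReal.ofReal_coe_nnreal, ENNReal.ofNNReal_finsetProd]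
  exact Finset.prod_le_prod' fun i _ => (hε i).le

end WeakConvergence

section CyclicalInvariance

/-- The cost saved by recoupling the cycle `q` of points `(xᵢ, yᵢ)` into the points `(xᵢ, yᵢ₊₁)`;
the index `i + 1` is cyclic, as addition in `Fin (k + 1)` wraps around. -/
def cycleGain (c : X → Y → ℝ) {k : ℕ} (q : Fin (k + 1) → X × Y) : ℝ :=
  (∑ i, c (q i).1 (q i).2) - ∑ i, c (q i).1 (q (i + 1)).2

theorem continuous_cycleGain [TopologicalSpace X] [TopologicalSpace Y] {c : X → Y → ℝ}
    (hc : Continuous fun z : X × Y => c z.1 z.2) (k : ℕ) :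
    Continuous (cycleGain c : (Fin (k + 1) → X × Y) → ℝ) := by
  have continuous_cost (i j : Fin (k + 1)) :
      Continuous fun q : Fin (k + 1) → X × Y => c (q i).1 (q j).2 :=
    hc.comp (f := fun q : Fin (k + 1) → X × Y => ((q i).1, (q j).2)) (by fun_prop)
  exact (continuous_finsetSum _ fun i _ => continuous_cost i i).sub
    (continuous_finsetSum _ fun i _ => continuous_cost i (i + 1))

theorem exists_forall_mem_pi_ball_lt_cycleGain [PseudoMetricSpace X] [PseudoMetricSpace Y]
    {c : X → Y → ℝ} (hc : Continuous fun z : X × Y => c z.1 z.2) {k : ℕ}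
    {p : Fin (k + 1) → X × Y} {δ : ℝ} (hδ : δ < cycleGain c p) :
    ∃ r > 0, ∀ q ∈ univ.pi (fun i => Metric.ball (p i) r), δ < cycleGain c q := by
  obtain ⟨r, hr, hball⟩ := Metric.eventually_nhds_iff_ball.1
    ((continuous_cycleGain hc k).continuousAt.eventually_const_lt hδ)
  exact ⟨r, hr, ball_pi p hr ▸ hball⟩

variable [MeasurableSpace X] [MeasurableSpace Y] {c : X → Y → ℝ} {ε : ℝ}
  {μ : Measure X} {ν : Measure Y} {π : Measure (X × Y)}

theorem IsCoupling.isProbabilityMeasure_left (hπ : IsCoupling μ ν π) : IsProbabilityMeasure μ :=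
  have := hπ.1
  hπ.2.1 ▸ Measure.isProbabilityMeasure_map measurable_fst.aemeasurable

theorem IsCoupling.isProbabilityMeasure_right (hπ : IsCoupling μ ν π) : IsProbabilityMeasure ν :=
  have := hπ.1
  hπ.2.2 ▸ Measure.isProbabilityMeasure_map measurable_snd.aemeasurable

theorem IsCyclInvariant.exists_prod_density_eq (hπ : IsCyclInvariant c ε μ ν π) :
    ∃ d : X × Y → ℝ≥0∞, Measurable d ∧ π = (μ.prod ν).withDensity d ∧
      ∀ (k : ℕ) (q : Fin (k + 1) → X × Y), ∏ i, d (q i) =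
        ENNReal.ofReal (Real.exp (-cycleGain c q / ε)) * ∏ i, d ((q i).1, (q (i + 1)).2) := by
  obtain ⟨-, D, D_meas, D_pos, rfl, D_cycle⟩ := hπ
  refine ⟨fun z => ENNReal.ofReal (D z), D_meas.ennreal_ofReal, rfl, fun k q => ?_⟩
  rw [← ENNReal.ofReal_prod_of_nonneg fun i _ => (D_pos _).le,
    ← ENNReal.ofReal_prod_of_nonneg fun i _ => (D_pos _).le,
    ← ENNReal.ofReal_mul (Real.exp_pos _).le, neg_div, div_eq_inv_mul, ← neg_mul, ← one_div]
  exact congrArg ENNReal.ofReal (D_cycle k (fun i => (q i).1) fun i => (q i).2)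

theorem IsCyclInvariant.pi_setOf_le_cycleGain_le (hπ : IsCyclInvariant c ε μ ν π) (hε : 0 < ε)
    (k : ℕ) (δ : ℝ) :
    Measure.pi (fun _ : Fin (k + 1) => π) {q | δ ≤ cycleGain c q} ≤
      ENNReal.ofReal (Real.exp (-δ / ε)) := by
  have := hπ.1.1
  have := hπ.1.isProbabilityMeasure_left
  have := hπ.1.isProbabilityMeasure_right
  obtain ⟨d, d_meas, rfl, d_cycle⟩ := hπ.exists_prod_density_eq
  let P : Measure (Fin (k + 1) → X × Y) := Measure.pi fun _ => μ.prod ν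
  let recouple : (Fin (k + 1) → X × Y) → Fin (k + 1) → X × Y :=
    fun q i => ((q i).1, (q (i + 1)).2)
  have recouple_mp : MeasurePreserving recouple P P :=
    measurePreserving_pi_prod_permute_snd μ ν (Equiv.addRight 1)
  let density : (Fin (k + 1) → X × Y) → ℝ≥0∞ := fun q => ∏ i, d (q i)
  have density_meas : Measurable density := by fun_prop
  have pi_eq : Measure.pi (fun _ : Fin (k + 1) => (μ.prod ν).withDensity d) =
      P.withDensity density := pi_withDensity_s4 _ fun _ => d_meas
  have density_le : ∀ q ∈ {q | δ ≤ cycleGain c q},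
      density q ≤ ENNReal.ofReal (Real.exp (-δ / ε)) * density (recouple q) := fun q hq => by
    refine (d_cycle k q).trans_le ?_
    gcongr
    exact hq
  calc Measure.pi (fun _ : Fin (k + 1) => (μ.prod ν).withDensity d) {q | δ ≤ cycleGain c q}
      = P.withDensity density {q | δ ≤ cycleGain c q} := by rw [pi_eq]
    _ ≤ ENNReal.ofReal (Real.exp (-δ / ε)) * P.withDensity density univ :=
        withDensity_le_mul_withDensity_univ recouple_mp density_meas density_le
    _ = ENNReal.ofReal (Real.exp (-δ / ε)) := by rw [← pi_eq, measure_univ, mul_one]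

theorem IsCyclInvariant.prod_measure_le (hπ : IsCyclInvariant c ε μ ν π) (hε : 0 < ε) {k : ℕ}
    {δ : ℝ} {U : Fin (k + 1) → Set (X × Y)} (hU : ∀ q ∈ univ.pi U, δ ≤ cycleGain c q) :
    ∏ i, π (U i) ≤ ENNReal.ofReal (Real.exp (-δ / ε)) := by
  have := hπ.1.1
  rw [← Measure.pi_pi]
  exact (measure_mono fun q hq => mem_ofPred.2 (hU q hq)).trans (hπ.pi_setOf_le_cycleGain_le hε k δ)

end CyclicalInvariance

theorem stmt4_general
    [MeasurableSpace X] [PseudoMetricSpace X] [OpensMeasurableSpace X]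
    [MeasurableSpace Y] [PseudoMetricSpace Y] [OpensMeasurableSpace Y]
    [SecondCountableTopologyEither X Y] {μ : Measure X} {ν : Measure Y}
    {c : X → Y → ℝ} (hc : Continuous fun z : X × Y => c z.1 z.2)
    {πε : ℝ → Measure (X × Y)} (hπε : ∀ ε, 0 < ε → IsCyclInvariant c ε μ ν (πε ε))
    {πs : Measure (X × Y)} [IsProbabilityMeasure πs] (hconv : TendstoWeakly πε πs)
    {k : ℕ} {p : Fin (k + 1) → X × Y} (hp : ∀ i, i ≠ 0 → p i ∈ mSupport πs)
    {δ : ℝ} (hδ : δ < cycleGain c p) :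
    ∃ α > (0 : ℝ), ∃ r > (0 : ℝ), ∃ ε₀ > (0 : ℝ), ∀ ε, 0 < ε → ε ≤ ε₀ →
      πε ε (Metric.ball (p 0) r) ≤ ENNReal.ofReal (α * Real.exp (-δ / ε)) := by
  obtain ⟨r, hr, gain_gt⟩ := exists_forall_mem_pi_ball_lt_cycleGain hc hδ
  obtain ⟨b, hb, lower⟩ := hconv.exists_pos_eventually_le_prod_measure (fun ε hε => (hπε ε hε).1.1)
    (fun _ : Fin k => Metric.isOpen_ball)
    (fun j => hp j.succ j.succ_ne_zero _ Metric.isOpen_ball (Metric.mem_ball_self hr))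
  obtain ⟨ε₀, hε₀, lower⟩ := mem_nhdsGT_iff_exists_Ioc_subset.1 lower
  refine ⟨b⁻¹, inv_pos.2 hb, r, hr, ε₀, hε₀, fun ε hε hle => ?_⟩
  rw [← div_eq_inv_mul, ENNReal.ofReal_div_of_pos hb, ENNReal.le_div_iff_mul_le
    (.inl (ENNReal.ofReal_pos.2 hb).ne') (.inl ENNReal.ofReal_ne_top)]
  calc πε ε (Metric.ball (p 0) r) * ENNReal.ofReal b
      ≤ πε ε (Metric.ball (p 0) r) * ∏ j : Fin k, πε ε (Metric.ball (p j.succ) r) := by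
        gcongr
        exact lower ⟨hε, hle⟩
    _ = ∏ i, πε ε (Metric.ball (p i) r) :=
        (Fin.prod_univ_succ fun i => πε ε (Metric.ball (p i) r)).symm
    _ ≤ ENNReal.ofReal (Real.exp (-δ / ε)) :=
        (hπε ε hε).prod_measure_le hε fun q hq => (gain_gt q hq).le

section Statement

variable {X Y : Type*}
  [MeasurableSpace X] [MetricSpace X] [PolishSpace X] [BorelSpace X]
  [MeasurableSpace Y] [MetricSpace Y] [PolishSpace Y] [BorelSpace Y]

/-- exponential decay of the mass of a small ball around a point improving on `Γ`. -/
theorem stmt4 (μ : Measure X) (ν : Measure Y)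
    [IsProbabilityMeasure μ] [IsProbabilityMeasure ν]
    (c : X → Y → ℝ) (hc : Continuous fun p : X × Y => c p.1 p.2) (hc0 : ∀ x y, 0 ≤ c x y)
    (πε : ℝ → Measure (X × Y)) [∀ ε, IsProbabilityMeasure (πε ε)]
    (hπε : ∀ ε, 0 < ε → IsCyclInvariant c ε μ ν (πε ε))
    (πs : Measure (X × Y)) (hπs : IsCoupling μ ν πs) (hconv : TendstoWeakly πε πs)
    (x : X) (y : Y) (k : ℕ) (p : Fin (k + 2) → X × Y)
    (hp0 : p 0 = (x, y)) (hpΓ : ∀ i, i ≠ 0 → p i ∈ mSupport πs)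
    (δ₀ : ℝ) (hδ₀ : δ₀ = (∑ i, c (p i).1 (p i).2) - ∑ i, c (p i).1 (p (i + 1)).2)
    (hδ₀pos : 0 < δ₀) (δ : ℝ) (hδ : δ < δ₀) :
    ∃ α > (0 : ℝ), ∃ r > (0 : ℝ), ∃ ε₀ > (0 : ℝ), ∀ ε, 0 < ε → ε ≤ ε₀ →
      πε ε (Metric.ball (x, y) r) ≤ ENNReal.ofReal (α * Real.exp (-δ / ε)) := by
  have := hπs.1
  rw [← hp0]
  exact stmt4_general hc hπε hconv hpΓ (hδ.trans_eq hδ₀)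

end Statement

end EOT
end
end
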